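/- arXiv:2112.10679 — 7 statements merged into one kernel-verified Lean document; each statement's English description precedes it below -/
import Mathlib

section
/- For every integer m ≥ 2, the kernel of the ℂ-algebra homomorphism φ : ℂ[X_0, …, X_{m−1}] → ℂ[T] (from MvPolynomial (Fin m) ℂ to Polynomial ℂ) determined by φ(X_i) = T^{m+i} for i = 0, …, m−1 equals the ideal generated by the 2×2 minors of the 2×m matrix whose first row is (X_0, X_1, …, X_{m−1}) and whose second row is (X_1, X_2, …, X_{m−1}, X_0²); explicitly, it is the ideal generated by the polynomials X_i·σ(j) − X_j·σ(i) for 0 ≤ i < j ≤ m−1, where σ(k) = X_{k+1} for k < m−1 and σ(m−1) = X_0². -/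
theorem curve_pos (m : ℕ) (hm : 2 ≤ m) : 0 < m := by omega

/-- Normal form of weight `d`. -/
noncomputable def curveNF (m : ℕ) (hm : 2 ≤ m) (d : ℕ) : MvPolynomial (Fin m) ℂ :=
  if d = 0 then 1 else
    (MvPolynomial.X (⟨0, curve_pos m hm⟩ : Fin m)) ^ (d / m - 1) *
      MvPolynomial.X (⟨d % m, Nat.mod_lt _ (curve_pos m hm)⟩ : Fin m)

theorem curveNF_eq (m : ℕ) (hm : 2 ≤ m) (a : ℕ) (r : Fin m) (d : ℕ)
    (hd : d = (a + 1) * m + r) :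
    curveNF m hm d = (MvPolynomial.X (⟨0, curve_pos m hm⟩ : Fin m)) ^ a * MvPolynomial.X r := by
  have hr := r.2
  have h0 : d ≠ 0 := by
    have : 0 < (a + 1) * m := by positivity
    omega
  have h1 : d / m = a + 1 := by
    rw [hd, add_comm, Nat.add_mul_div_right _ _ (by omega), Nat.div_eq_of_lt hr]; omega
  have h2 : d % m = r := by
    rw [hd, add_comm, Nat.add_mul_mod_self_right, Nat.mod_eq_of_lt hr]
  simp only [curveNF, h0, if_false, h1, h2, Nat.add_sub_cancel]

theorem curve_mul (m : ℕ) (hm : 2 ≤ m)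
    (σ : Fin m → MvPolynomial (Fin m) ℂ)
    (hσ : ∀ k : Fin m, σ k =
      if h : (k : ℕ) + 1 < m then MvPolynomial.X (⟨(k : ℕ) + 1, h⟩ : Fin m)
      else (MvPolynomial.X (⟨0, curve_pos m hm⟩ : Fin m)) ^ 2)
    (I : Ideal (MvPolynomial (Fin m) ℂ))
    (hI : ∀ i j : Fin m, MvPolynomial.X i * σ j - MvPolynomial.X j * σ i ∈ I)
    (i : ℕ) : ∀ (hi : i < m) (j : Fin m),
      MvPolynomial.X (⟨i, hi⟩ : Fin m) * MvPolynomial.X j - curveNF m hm (2 * m + i + j) ∈ I := by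
  induction i with
  | zero =>
    intro hi j
    rw [curveNF_eq m hm 1 j _ (by ring)]
    simp
  | succ i ih =>
    intro hi j
    have h := hI ⟨i, by omega⟩ j
    rw [hσ ⟨i, by omega⟩, dif_pos hi, hσ j] at h
    split_ifs at h with hj
    · have h2 := ih (by omega) ⟨j + 1, hj⟩
      have e : 2 * m + i + (j + 1) = 2 * m + (i + 1) + j := by ring
      simp only [e] at h2
      have := I.sub_mem h2 h
      ring_nf at this ⊢
      exact this
    · have hj' : (j : ℕ) + 1 = m := by have := j.2; omega
      rw [curveNF_eq m hm 2 ⟨i, by omega⟩ _ (by simp only; omega)]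
      have := I.neg_mem h
      ring_nf at this ⊢
      exact this

theorem curve_step (m : ℕ) (hm : 2 ≤ m)
    (I : Ideal (MvPolynomial (Fin m) ℂ))
    (hI : ∀ i j : Fin m,
      MvPolynomial.X i * MvPolynomial.X j - curveNF m hm (2 * m + i + j) ∈ I)
    (d : ℕ) (hd : d = 0 ∨ m ≤ d) (i : Fin m) :
    curveNF m hm d * MvPolynomial.X i - curveNF m hm (d + (m + i)) ∈ I := by
  rcases hd with rfl | hd
  · rw [curveNF_eq m hm 0 i (0 + (m + i)) (by ring)]
    simp [curveNF]
  · obtain ⟨a, ha⟩ : ∃ a, d / m = a + 1 :=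
      ⟨d / m - 1, by have := Nat.div_pos hd (by omega); omega⟩
    have hr : d % m < m := Nat.mod_lt _ (by omega)
    have hdd : d = (a + 1) * m + d % m := by
      rw [← ha, mul_comm]; exact (Nat.div_add_mod d m).symm
    generalize d % m = r at hr hdd
    rw [curveNF_eq m hm a ⟨r, hr⟩ d hdd]
    have h := I.mul_mem_left ((MvPolynomial.X (⟨0, curve_pos m hm⟩ : Fin m)) ^ a) (hI ⟨r, hr⟩ i)
    have hi := i.2
    have e : curveNF m hm (d + (m + i)) = (MvPolynomial.X (⟨0, curve_pos m hm⟩ : Fin m)) ^ a *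
        curveNF m hm (2 * m + r + i) := by
      by_cases hri : r + i < m
      · rw [curveNF_eq m hm (a + 1) ⟨r + i, hri⟩ _ (by rw [hdd]; ring),
          curveNF_eq m hm 1 ⟨r + i, hri⟩ _ (by simp only; omega)]
        ring
      · obtain ⟨k, hk⟩ : ∃ k, r + i = m + k := ⟨r + i - m, by omega⟩
        rw [curveNF_eq m hm (a + 2) ⟨k, by omega⟩ _ (by rw [hdd]; simp only; linarith),
          curveNF_eq m hm 2 ⟨k, by omega⟩ _ (by simp only; omega)]
        ring
    rw [e]
    simpa only [mul_sub, mul_assoc] using h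

/-- For `m ≥ 2`, the kernel of the ℂ-algebra map `ℂ[X_0,…,X_{m−1}] → ℂ[T]`, `X_i ↦ T^{m+i}`,
equals the ideal generated by the 2×2 minors `X_i·σ(j) − X_j·σ(i)` (for `i < j`) of the
matrix with rows `(X_0,…,X_{m−1})` and `(X_1,…,X_{m−1},X_0²)`, where `σ(k) = X_{k+1}`
for `k < m−1` and `σ(m−1) = X_0²`. -/
theorem stmt_0 (m : ℕ) (hm : 2 ≤ m)
    (σ : Fin m → MvPolynomial (Fin m) ℂ)
    (hσ : ∀ k : Fin m, σ k =
      if h : (k : ℕ) + 1 < m then MvPolynomial.X (⟨(k : ℕ) + 1, h⟩ : Fin m)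
      else (MvPolynomial.X (⟨0, by omega⟩ : Fin m)) ^ 2) :
    RingHom.ker (MvPolynomial.aeval
        (fun i : Fin m => (Polynomial.X : Polynomial ℂ) ^ (m + (i : ℕ))) :
        MvPolynomial (Fin m) ℂ →ₐ[ℂ] Polynomial ℂ) =
    Ideal.span {p : MvPolynomial (Fin m) ℂ |
      ∃ i j : Fin m, i < j ∧ p = MvPolynomial.X i * σ j - MvPolynomial.X j * σ i} := by
  set I := Ideal.span {p : MvPolynomial (Fin m) ℂ |
      ∃ i j : Fin m, i < j ∧ p = MvPolynomial.X i * σ j - MvPolynomial.X j * σ i} with hIdef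
  set φ := (MvPolynomial.aeval
        (fun i : Fin m => (Polynomial.X : Polynomial ℂ) ^ (m + (i : ℕ))) :
        MvPolynomial (Fin m) ℂ →ₐ[ℂ] Polynomial ℂ) with hφ
  have hI : ∀ i j : Fin m, MvPolynomial.X i * σ j - MvPolynomial.X j * σ i ∈ I := by
    intro i j
    rcases lt_trichotomy i j with h | h | h
    · exact Ideal.subset_span ⟨i, j, h, rfl⟩
    · subst h; simp
    · rw [← neg_sub]
      exact I.neg_mem (Ideal.subset_span ⟨j, i, h, rfl⟩)
  have hX : ∀ i, φ (MvPolynomial.X i) = Polynomial.X ^ (m + (i : ℕ)) := by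
    intro i; simp [hφ]
  have hφσ : ∀ k, φ (σ k) = Polynomial.X ^ (m + (k : ℕ) + 1) := by
    intro k
    have hk := k.2
    rw [hσ]
    split_ifs with h
    · rw [hX]; rfl
    · rw [map_pow, hX, ← pow_mul]
      congr 1
      simp only
      omega
  have hstep := curve_step m hm I (fun i j => curve_mul m hm σ hσ I hI i i.2 j)
  have hmon : ∀ (s : Fin m →₀ ℕ) (c : ℂ), ∃ d c', (d = 0 ∨ m ≤ d) ∧
      φ (MvPolynomial.monomial s c) = Polynomial.monomial d c' ∧
      MvPolynomial.monomial s c - c' • curveNF m hm d ∈ I := by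
    intro s c
    refine MvPolynomial.induction_on_monomial
      (motive := fun p => ∃ d c', (d = 0 ∨ m ≤ d) ∧ φ p = Polynomial.monomial d c' ∧
        p - c' • curveNF m hm d ∈ I) ?_ ?_ s c
    · intro a
      refine ⟨0, a, Or.inl rfl, ?_, ?_⟩
      · simp [hφ, MvPolynomial.algHom_C]
      · simp [curveNF, MvPolynomial.smul_eq_C_mul]
    · rintro p i ⟨d, c', hd, h1, h2⟩
      refine ⟨d + (m + i), c', Or.inr (by omega), ?_, ?_⟩
      · rw [map_mul, h1, hX, Polynomial.monomial_mul_X_pow]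
      · have h3 := I.mul_mem_right (MvPolynomial.X i) h2
        have h4 := I.mul_mem_left (MvPolynomial.C c') (hstep d hd i)
        have := I.add_mem h3 h4
        simp only [MvPolynomial.smul_eq_C_mul] at this ⊢
        ring_nf at this ⊢
        exact this
  let s : Polynomial ℂ →ₗ[ℂ] MvPolynomial (Fin m) ℂ :=
    (Polynomial.basisMonomials ℂ).constr ℂ (curveNF m hm)
  have hs : ∀ d c, s (Polynomial.monomial d c) = c • curveNF m hm d := by
    intro d c
    have h1 : Polynomial.monomial d c = c • Polynomial.basisMonomials ℂ d := by
      simp [Polynomial.smul_monomial]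
    rw [h1, map_smul, Module.Basis.constr_basis]
  have key : ∀ p, p - s (φ p) ∈ I := by
    intro p
    induction p using MvPolynomial.induction_on' with
    | monomial u a =>
      obtain ⟨d, c', -, h1, h2⟩ := hmon u a
      rw [h1, hs]
      exact h2
    | add p q hp hq =>
      rw [map_add, map_add, add_sub_add_comm]
      exact I.add_mem hp hq
  apply le_antisymm
  · intro p hp
    have h := key p
    rw [RingHom.mem_ker] at hp
    have hp' : φ p = 0 := hp
    rwa [hp', map_zero, sub_zero] at h
  · rw [hIdef, Ideal.span_le]
    rintro p ⟨i, j, -, rfl⟩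
    change φ _ = 0
    rw [map_sub, map_mul, map_mul, hX, hX, hφσ, hφσ]
    ring
end

section
/- For every integer n ≥ 2, let S be the additive submonoid of ℕ generated by {n+1, n+2, …, 2n} ∪ {2n+2}. Then S is symmetric with Frobenius number 2n+1: for every natural number k with k ≤ 2n+1, one has k ∈ S if and only if 2n+1−k ∉ S. -/
/-- For `n ≥ 2`, the additive submonoid `S` of ℕ generated by `{n+1, …, 2n} ∪ {2n+2}` is
symmetric with Frobenius number `2n+1`: for every `k ≤ 2n+1`, `k ∈ S ↔ 2n+1−k ∉ S`. -/
theorem stmt_5 (n : ℕ) (hn : 2 ≤ n) (S : AddSubmonoid ℕ)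
    (hS : S = AddSubmonoid.closure (Set.Icc (n + 1) (2 * n) ∪ {2 * n + 2})) :
    ∀ k : ℕ, k ≤ 2 * n + 1 → (k ∈ S ↔ (2 * n + 1 - k) ∉ S) := by
  have h1 : ∀ k ∈ S, k = 0 ∨ (n + 1 ≤ k ∧ k ≤ 2 * n) ∨ 2 * n + 2 ≤ k := by
    intro k hk
    rw [hS] at hk
    induction hk using AddSubmonoid.closure_induction with
    | mem x hx =>
      simp only [Set.mem_union, Set.mem_Icc, Set.mem_singleton_iff] at hx
      omega
    | zero => exact Or.inl rfl
    | add x y _ _ hx hy => omega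
  have h2 : ∀ k, n + 1 ≤ k → k ≤ 2 * n → k ∈ S := by
    intro k ha hb
    rw [hS]
    exact AddSubmonoid.subset_closure (Or.inl ⟨ha, hb⟩)
  intro k hk
  constructor
  · intro hkS hkS'
    have := h1 _ hkS
    have := h1 _ hkS'
    omega
  · intro hk'
    by_cases h0 : k = 0
    · rw [h0]
      exact S.zero_mem
    by_cases hs : n + 1 ≤ k
    · by_cases ht : k ≤ 2 * n
      · exact h2 k hs ht
      · exfalso
        apply hk'
        have : 2 * n + 1 - k = 0 := by omega
        rw [this]
        exact S.zero_mem
    · exact absurd (h2 _ (by omega) (by omega)) hk'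
end

section
/- Let r ≥ 3 be an integer, P = MvPolynomial (Fin r) ℂ, 𝔪 the ideal of P generated by the variables, I = 𝔪², and B = P/I. Let d̄ : I/I² → B ⊗_P Ω_{P/ℂ} be the B-linear map induced by the universal derivation d : P → Ω_{P/ℂ}, and let T¹ be the cokernel of the B-linear map Hom_B(B ⊗_P Ω_{P/ℂ}, B) → Hom_B(I/I², B) given by precomposition with d̄. Then dim_ℂ T¹ = (1/2)(r−1)r(r+2). -/
set_option synthInstance.maxHeartbeats 1000000
open TensorProduct

namespace TOne
open MvPolynomial

variable {r : ℕ}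

theorem mem_iff {I : Ideal (MvPolynomial (Fin r) ℂ)}
    (hI : I = (Ideal.span (Set.range (X : Fin r → MvPolynomial (Fin r) ℂ))) ^ 2)
    (p : MvPolynomial (Fin r) ℂ) : p ∈ I ↔ ∀ m, Finsupp.degree m < 2 → coeff m p = 0 := by
  rw [hI]; exact mem_pow_idealOfVars_iff' 2 p

/-- the coefficient functional on the quotient -/
noncomputable def cf (I : Ideal (MvPolynomial (Fin r) ℂ))
    (hI : I = (Ideal.span (Set.range (X : Fin r → MvPolynomial (Fin r) ℂ))) ^ 2)
    (n : Fin r →₀ ℕ) (hn : Finsupp.degree n < 2) : (MvPolynomial (Fin r) ℂ ⧸ I) →ₗ[ℂ] ℂ :=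
  (Submodule.liftQ (I.restrictScalars ℂ) (lcoeff ℂ n) (fun p hp => by
    have := (mem_iff hI p).1 hp n hn
    simpa using this)) ∘ₗ (Submodule.Quotient.restrictScalarsEquiv ℂ I).symm.toLinearMap

theorem cf_mk (I : Ideal (MvPolynomial (Fin r) ℂ))
    (hI : I = (Ideal.span (Set.range (X : Fin r → MvPolynomial (Fin r) ℂ))) ^ 2)
    (n : Fin r →₀ ℕ) (hn : Finsupp.degree n < 2) (p : MvPolynomial (Fin r) ℂ) :
    cf I hI n hn (Ideal.Quotient.mk I p) = coeff n p := rfl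

/-- Degree two exponents. -/
abbrev DD (r : ℕ) := {m : Fin r →₀ ℕ // Finsupp.degree m = 2}

noncomputable def symEquiv (r : ℕ) : Sym (Fin r) 2 ≃ DD r :=
  (Sym.equivNatSum (Fin r) 2).trans (Equiv.subtypeEquivRight (fun m => by
    simp [Finsupp.degree_apply, Finsupp.sum]))

noncomputable instance : Fintype (DD r) := Fintype.ofEquiv _ (symEquiv r)

theorem card_DD : Fintype.card (DD r) = (r + 1).choose 2 := by
  rw [← Fintype.card_congr (symEquiv r), Sym.card_sym_eq_choose]; simp

theorem deg_zero_lt : Finsupp.degree (0 : Fin r →₀ ℕ) < 2 := by simp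
theorem deg_single_lt (k : Fin r) : Finsupp.degree (Finsupp.single k 1 : Fin r →₀ ℕ) < 2 := by simp

theorem eq_of_deg_lt (m : Fin r →₀ ℕ) (h : Finsupp.degree m < 2) :
    m = 0 ∨ ∃ k, m = Finsupp.single k 1 := by
  have : Finsupp.degree m = 0 ∨ Finsupp.degree m = 1 := by omega
  rcases this with h | h
  · left; exact (Finsupp.degree_eq_zero_iff m).1 h
  · right
    have h0 : m ≠ 0 := by rintro rfl; simp at h
    obtain ⟨i, hi⟩ := Finsupp.ne_iff.1 h0
    have hle : Finsupp.single i 1 ≤ m := by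
      simp only [Finsupp.single_le_iff]; simp at hi; omega
    obtain ⟨c, rfl⟩ := le_iff_exists_add.1 hle
    have hc : Finsupp.degree c = 0 := by
      rw [map_add] at h; simpa using h
    rw [Finsupp.degree_eq_zero_iff] at hc
    exact ⟨i, by rw [hc, add_zero]⟩

theorem exists_pair (m : Fin r →₀ ℕ) (h : Finsupp.degree m = 2) :
    ∃ i j, m = Finsupp.single i 1 + Finsupp.single j 1 := by
  have h0 : m ≠ 0 := by rintro rfl; simp at h
  obtain ⟨i, hi⟩ := Finsupp.ne_iff.1 h0
  have hle : Finsupp.single i 1 ≤ m := by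
    simp only [Finsupp.single_le_iff]; simp at hi; omega
  obtain ⟨c, rfl⟩ := le_iff_exists_add.1 hle
  have hc : Finsupp.degree c = 1 := by
    rw [map_add] at h; simp at h; omega
  rcases eq_of_deg_lt c (by omega) with rfl | ⟨k, rfl⟩
  · simp at hc
  · exact ⟨i, k, rfl⟩

theorem mono_mem {I : Ideal (MvPolynomial (Fin r) ℂ)}
    (hI : I = (Ideal.span (Set.range (X : Fin r → MvPolynomial (Fin r) ℂ))) ^ 2)
    (m : DD r) : monomial m.1 (1 : ℂ) ∈ I := by
  rw [hI]; exact (monomial_mem_pow_idealOfVars_iff 2 m.1 one_ne_zero).2 m.2.ge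

theorem q_eq_zero {I : Ideal (MvPolynomial (Fin r) ℂ)}
    (hI : I = (Ideal.span (Set.range (X : Fin r → MvPolynomial (Fin r) ℂ))) ^ 2)
    (b : MvPolynomial (Fin r) ℂ ⧸ I) (h0 : cf I hI 0 deg_zero_lt b = 0)
    (h1 : ∀ k, cf I hI (Finsupp.single k 1) (deg_single_lt k) b = 0) : b = 0 := by
  obtain ⟨p, rfl⟩ := Ideal.Quotient.mk_surjective b
  rw [Ideal.Quotient.eq_zero_iff_mem, mem_iff hI]
  intro m hm
  rcases eq_of_deg_lt m hm with rfl | ⟨k, rfl⟩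
  · exact h0
  · exact h1 k

theorem cf_X_smul {I : Ideal (MvPolynomial (Fin r) ℂ)}
    (hI : I = (Ideal.span (Set.range (X : Fin r → MvPolynomial (Fin r) ℂ))) ^ 2)
    (b : MvPolynomial (Fin r) ℂ ⧸ I) (i k : Fin r) :
    cf I hI (Finsupp.single k 1) (deg_single_lt k) ((X i : MvPolynomial (Fin r) ℂ) • b)
      = if i = k then cf I hI 0 deg_zero_lt b else 0 := by
  obtain ⟨p, rfl⟩ := Ideal.Quotient.mk_surjective b
  have : (X i : MvPolynomial (Fin r) ℂ) • (Ideal.Quotient.mk I p) = Ideal.Quotient.mk I (X i * p) := rfl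
  rw [this, cf_mk, cf_mk, coeff_X_mul']
  by_cases h : i = k
  · subst h; simp
  · simp [h, Finsupp.single_apply, Ne.symm h, eq_comm]

theorem cf_monomial_smul {I : Ideal (MvPolynomial (Fin r) ℂ)}
    (hI : I = (Ideal.span (Set.range (X : Fin r → MvPolynomial (Fin r) ℂ))) ^ 2)
    (b : MvPolynomial (Fin r) ℂ ⧸ I) (u : Fin r →₀ ℕ) (c : ℂ) (hu : u ≠ 0) (k : Fin r) :
    cf I hI (Finsupp.single k 1) (deg_single_lt k) ((monomial u c : MvPolynomial (Fin r) ℂ) • b)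
      = if u = Finsupp.single k 1 then c * cf I hI 0 deg_zero_lt b else 0 := by
  obtain ⟨p, rfl⟩ := Ideal.Quotient.mk_surjective b
  have : (monomial u c : MvPolynomial (Fin r) ℂ) • (Ideal.Quotient.mk I p) =
    Ideal.Quotient.mk I (monomial u c * p) := rfl
  rw [this, cf_mk, cf_mk, coeff_monomial_mul']
  by_cases h : u = Finsupp.single k 1
  · subst h; simp
  · rw [if_neg h, if_neg]
    intro hle
    apply h
    obtain ⟨v, hv⟩ := le_iff_exists_add.1 hle
    have hd := congrArg Finsupp.degree hv
    rw [map_add] at hd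
    simp at hd
    have : Finsupp.degree u ≠ 0 := mt (Finsupp.degree_eq_zero_iff u).1 hu
    have hv0 : Finsupp.degree v = 0 := by omega
    have : v = 0 := (Finsupp.degree_eq_zero_iff v).1 hv0
    subst this
    simpa using hv.symm

/-- homs to the quotient descend to the conormal module, first as `P`-linear maps -/
noncomputable def descend0 {I : Ideal (MvPolynomial (Fin r) ℂ)}
    (g : I →ₗ[MvPolynomial (Fin r) ℂ] (MvPolynomial (Fin r) ℂ ⧸ I)) :
    I.Cotangent →ₗ[MvPolynomial (Fin r) ℂ] (MvPolynomial (Fin r) ℂ ⧸ I) :=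
  Submodule.liftQ (I • ⊤ : Submodule (MvPolynomial (Fin r) ℂ) I) g (by
      rw [Submodule.smul_le]
      intro p hp x _
      rw [LinearMap.mem_ker, map_smul]
      obtain ⟨q, hq⟩ := Ideal.Quotient.mk_surjective (g x)
      rw [← hq]
      exact Ideal.Quotient.eq_zero_iff_mem.2 (I.mul_mem_right q hp))

/-- homs to the quotient descend to the conormal module -/
noncomputable def descend {I : Ideal (MvPolynomial (Fin r) ℂ)}
    (g : I →ₗ[MvPolynomial (Fin r) ℂ] (MvPolynomial (Fin r) ℂ ⧸ I)) :
    Module.Dual (MvPolynomial (Fin r) ℂ ⧸ I) I.Cotangent :=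
  LinearMap.extendScalarsOfSurjective (R := MvPolynomial (Fin r) ℂ)
    (Ideal.Quotient.mk_surjective (I := I)) (descend0 g)

theorem descend_apply {I : Ideal (MvPolynomial (Fin r) ℂ)}
    (g : I →ₗ[MvPolynomial (Fin r) ℂ] (MvPolynomial (Fin r) ℂ ⧸ I)) (x : I) :
    descend g (I.toCotangent x) = g x := rfl

theorem dual_smul_P {I : Ideal (MvPolynomial (Fin r) ℂ)}
    (φ : Module.Dual (MvPolynomial (Fin r) ℂ ⧸ I) I.Cotangent) (p : MvPolynomial (Fin r) ℂ) (x : I) :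
    φ (I.toCotangent (p • x)) = p • φ (I.toCotangent x) := by
  rw [map_smul]
  exact map_smul (φ.restrictScalars (MvPolynomial (Fin r) ℂ)) p (I.toCotangent x)

/-- coordinates of a hom -/
noncomputable def coord (I : Ideal (MvPolynomial (Fin r) ℂ))
    (hI : I = (Ideal.span (Set.range (X : Fin r → MvPolynomial (Fin r) ℂ))) ^ 2) :
    Module.Dual (MvPolynomial (Fin r) ℂ ⧸ I) I.Cotangent →ₗ[ℂ] (DD r → Fin r → ℂ) where
  toFun φ m k := cf I hI (Finsupp.single k 1) (deg_single_lt k)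
    (φ (I.toCotangent ⟨monomial m.1 1, mono_mem hI m⟩))
  map_add' φ ψ := by
    funext m k
    simp only [LinearMap.add_apply, map_add, Pi.add_apply]
  map_smul' c φ := by
    funext m k
    simp only [LinearMap.smul_apply, map_smul, Pi.smul_apply, RingHom.id_apply]

theorem const_zero {I : Ideal (MvPolynomial (Fin r) ℂ)} (hr : 3 ≤ r)
    (hI : I = (Ideal.span (Set.range (X : Fin r → MvPolynomial (Fin r) ℂ))) ^ 2)
    (φ : Module.Dual (MvPolynomial (Fin r) ℂ ⧸ I) I.Cotangent) (m : DD r) :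
    cf I hI 0 deg_zero_lt (φ (I.toCotangent ⟨monomial m.1 1, mono_mem hI m⟩)) = 0 := by
  obtain ⟨m, hm⟩ := m
  obtain ⟨i, j, rfl⟩ := exists_pair m hm
  have : Nontrivial (Fin r) := Fin.nontrivial_iff_two_le.2 (by omega)
  obtain ⟨k, hk⟩ := exists_ne i
  have hm' : Finsupp.degree (Finsupp.single k 1 + Finsupp.single j 1 : Fin r →₀ ℕ) = 2 := by
    rw [map_add]; simp
  have e : (X k : MvPolynomial (Fin r) ℂ) •
      (⟨monomial (Finsupp.single i 1 + Finsupp.single j 1) 1, mono_mem hI ⟨_, hm⟩⟩ : I)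
      = (X i : MvPolynomial (Fin r) ℂ) •
      (⟨monomial (Finsupp.single k 1 + Finsupp.single j 1) 1, mono_mem hI ⟨_, hm'⟩⟩ : I) := by
    apply Subtype.ext
    rw [Submodule.coe_smul, Submodule.coe_smul, smul_eq_mul, smul_eq_mul]
    simp only [X, monomial_mul, mul_one]
    rw [add_left_comm]
  have e2 := congrArg (fun x => cf I hI (Finsupp.single k 1) (deg_single_lt k)
    (φ (I.toCotangent x))) e
  simp only [dual_smul_P, cf_X_smul] at e2
  simpa [hk.symm] using e2

theorem coord_injective {I : Ideal (MvPolynomial (Fin r) ℂ)} (hr : 3 ≤ r)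
    (hI : I = (Ideal.span (Set.range (X : Fin r → MvPolynomial (Fin r) ℂ))) ^ 2) :
    Function.Injective (coord I hI) := by
  rw [injective_iff_map_eq_zero]
  intro φ hφ
  have key : (φ.restrictScalars (MvPolynomial (Fin r) ℂ)) ∘ₗ I.toCotangent = 0 := by
    rw [Submodule.linearMap_eq_zero_iff_of_eq_span _
      (hI.trans (pow_idealOfVars_eq_span (σ := Fin r) (R := ℂ) 2))]
    rintro ⟨_, m, hm, rfl⟩
    refine q_eq_zero hI _ (const_zero hr hI φ ⟨m, hm⟩) (fun k => ?_)
    exact congrFun (congrFun hφ ⟨m, hm⟩) k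
  ext x
  obtain ⟨y, rfl⟩ := I.toCotangent_surjective x
  exact LinearMap.congr_fun key y

theorem coeff_mul_I {I : Ideal (MvPolynomial (Fin r) ℂ)}
    (hI : I = (Ideal.span (Set.range (X : Fin r → MvPolynomial (Fin r) ℂ))) ^ 2)
    (p f : MvPolynomial (Fin r) ℂ) (hf : f ∈ I) (m : DD r) :
    coeff m.1 (p * f) = coeff 0 p * coeff m.1 f := by
  rw [coeff_mul, Finset.sum_eq_single (0, m.1)]
  · rintro ⟨u, v⟩ huv hne
    rw [Finset.HasAntidiagonal.mem_antidiagonal] at huv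
    simp only at huv
    have hd := congrArg Finsupp.degree huv
    rw [map_add, m.2] at hd
    have hu : Finsupp.degree u ≠ 0 := by
      intro h
      have : u = 0 := (Finsupp.degree_eq_zero_iff u).1 h
      subst this
      apply hne
      simpa using huv
    simp only
    rw [(mem_iff hI f).1 hf v (by omega), mul_zero]
  · intro h; simp at h

theorem smul_lin {I : Ideal (MvPolynomial (Fin r) ℂ)}
    (hI : I = (Ideal.span (Set.range (X : Fin r → MvPolynomial (Fin r) ℂ))) ^ 2)
    (p : MvPolynomial (Fin r) ℂ) (k : Fin r) :
    p • Ideal.Quotient.mk I (X k) = coeff 0 p • Ideal.Quotient.mk I (X k) := by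
  change Ideal.Quotient.mk I (p * X k) = Ideal.Quotient.mk I (coeff 0 p • X k)
  rw [Ideal.Quotient.eq, mem_iff hI]
  intro m hm
  rw [coeff_sub, coeff_smul, coeff_mul_X', smul_eq_mul]
  rcases eq_of_deg_lt m hm with rfl | ⟨l, rfl⟩
  · simp
  · by_cases h : l = k
    · subst h; simp
    · simp [coeff_X, h, Ne.symm h, Finsupp.single_apply, Finsupp.single_left_inj]

/-- the hom with given coordinates -/
noncomputable def mkHom {I : Ideal (MvPolynomial (Fin r) ℂ)}
    (hI : I = (Ideal.span (Set.range (X : Fin r → MvPolynomial (Fin r) ℂ))) ^ 2)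
    (a : DD r → Fin r → ℂ) :
    I →ₗ[MvPolynomial (Fin r) ℂ] (MvPolynomial (Fin r) ℂ ⧸ I) where
  toFun f := ∑ m : DD r, ∑ k, (coeff m.1 f.1 * a m k) • Ideal.Quotient.mk I (X k)
  map_add' f g := by
    simp only [Submodule.coe_add, coeff_add, add_mul, add_smul, Finset.sum_add_distrib]
  map_smul' p f := by
    simp only [RingHom.id_apply, Finset.smul_sum]
    refine Finset.sum_congr rfl fun m _ => Finset.sum_congr rfl fun k _ => ?_
    rw [smul_comm p, smul_lin hI, smul_smul]
    congr 1
    change coeff m.1 (p * f.1) * a m k = _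
    rw [coeff_mul_I hI p f.1 f.2]
    ring

theorem coord_surjective {I : Ideal (MvPolynomial (Fin r) ℂ)}
    (hI : I = (Ideal.span (Set.range (X : Fin r → MvPolynomial (Fin r) ℂ))) ^ 2) :
    Function.Surjective (coord I hI) := by
  intro a
  refine ⟨descend (mkHom hI a), ?_⟩
  funext m k
  change cf I hI (Finsupp.single k 1) (deg_single_lt k)
    (∑ m' : DD r, ∑ k', (coeff m'.1 (monomial m.1 (1:ℂ)) * a m' k') • Ideal.Quotient.mk I (X k')) = _
  simp only [map_sum, map_smul, cf_mk, coeff_X, smul_eq_mul, coeff_monomial]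
  rw [Finset.sum_eq_single m, Finset.sum_eq_single k]
  · simp
  · intro b _ hb; simp [Finsupp.single_left_inj, hb]
  · simp
  · intro b _ hb
    apply Finset.sum_eq_zero
    intro _ _
    rw [if_neg (fun h => hb (Subtype.ext h.symm))]; simp
  · simp

/-- coordinates of the hom coming from a vector field with constant coefficients -/
noncomputable def LL (r : ℕ) : (Fin r → ℂ) →ₗ[ℂ] (DD r → Fin r → ℂ) where
  toFun β m k := ∑ i, if m.1 - Finsupp.single i 1 = Finsupp.single k 1 then (m.1 i : ℂ) * β i else 0
  map_add' β γ := by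
    funext m k
    simp only [Pi.add_apply, ← Finset.sum_add_distrib]
    refine Finset.sum_congr rfl fun i _ => ?_
    split_ifs <;> ring
  map_smul' c β := by
    funext m k
    simp only [Pi.smul_apply, smul_eq_mul, Finset.mul_sum, RingHom.id_apply]
    refine Finset.sum_congr rfl fun i _ => ?_
    split_ifs <;> ring

theorem LL_injective : Function.Injective (LL r) := by
  rw [injective_iff_map_eq_zero]
  intro β h
  funext i
  have := congrFun (congrFun h ⟨Finsupp.single i 2, by simp⟩) i
  change (∑ j, if Finsupp.single i 2 - Finsupp.single j 1 = Finsupp.single i 1 then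
    ((Finsupp.single i 2 : Fin r →₀ ℕ) j : ℂ) * β j else 0) = 0 at this
  rw [Finset.sum_eq_single i] at this
  · rw [← Finsupp.single_tsub] at this
    simpa using this
  · intro b _ hb
    simp [Finsupp.single_apply, hb.symm]
  · simp

theorem coord_dual (I : Ideal (MvPolynomial (Fin r) ℂ))
    (hI : I = (Ideal.span (Set.range (X : Fin r → MvPolynomial (Fin r) ℂ))) ^ 2)
    (dbar : I.Cotangent →ₗ[MvPolynomial (Fin r) ℂ ⧸ I]
      (MvPolynomial (Fin r) ℂ ⧸ I) ⊗[MvPolynomial (Fin r) ℂ]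
        (KaehlerDifferential ℂ (MvPolynomial (Fin r) ℂ)))
    (hdbar : ∀ x : I, dbar (I.toCotangent x)
      = 1 ⊗ₜ[MvPolynomial (Fin r) ℂ]
          (KaehlerDifferential.D ℂ (MvPolynomial (Fin r) ℂ) x.1))
    (l : KaehlerDifferential ℂ (MvPolynomial (Fin r) ℂ) →ₗ[MvPolynomial (Fin r) ℂ]
      (MvPolynomial (Fin r) ℂ ⧸ I)) :
    coord I hI (dbar.dualMap (l.liftBaseChange (MvPolynomial (Fin r) ℂ ⧸ I))) =
      LL r (fun i => cf I hI 0 deg_zero_lt (l (KaehlerDifferential.D ℂ _ (X i)))) := by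
  funext m k
  change cf I hI (Finsupp.single k 1) (deg_single_lt k)
    (l.liftBaseChange _ (dbar (I.toCotangent ⟨monomial m.1 1, mono_mem hI m⟩))) = 
    ∑ i, if m.1 - Finsupp.single i 1 = Finsupp.single k 1 then (m.1 i : ℂ) *
      cf I hI 0 deg_zero_lt (l (KaehlerDifferential.D ℂ _ (X i))) else 0
  rw [hdbar, LinearMap.liftBaseChange_one_tmul]
  have hD : l.compDer (KaehlerDifferential.D ℂ (MvPolynomial (Fin r) ℂ)) =
      mkDerivation ℂ (fun i => l (KaehlerDifferential.D ℂ _ (X i))) := by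
    apply derivation_ext
    intro i
    rw [mkDerivation_X]
    rfl
  have hD2 := Derivation.congr_fun hD (monomial m.1 1)
  rw [mkDerivation_monomial, one_smul, Finsupp.sum_fintype _ _ (by simp)] at hD2
  change l (KaehlerDifferential.D ℂ _ (monomial m.1 1)) = _ at hD2
  rw [hD2, map_sum]
  refine Finset.sum_congr rfl fun i _ => ?_
  rw [cf_monomial_smul]
  intro h0
  have := m.2
  have hle := tsub_eq_zero_iff_le.1 h0
  have := Finsupp.degree_mono hle
  simp [m.2] at this

end TOne

open TOne in
theorem stmt_7 (r : ℕ) (hr : 3 ≤ r)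
    (I : Ideal (MvPolynomial (Fin r) ℂ))
    (hI : I = (Ideal.span (Set.range (MvPolynomial.X : Fin r → MvPolynomial (Fin r) ℂ))) ^ 2)
    (dbar : I.Cotangent →ₗ[MvPolynomial (Fin r) ℂ ⧸ I]
      (MvPolynomial (Fin r) ℂ ⧸ I) ⊗[MvPolynomial (Fin r) ℂ]
        (KaehlerDifferential ℂ (MvPolynomial (Fin r) ℂ)))
    (hdbar : ∀ x : I, dbar (I.toCotangent x)
      = 1 ⊗ₜ[MvPolynomial (Fin r) ℂ]
          (KaehlerDifferential.D ℂ (MvPolynomial (Fin r) ℂ) x.1)) :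
    Module.finrank ℂ
      ((Module.Dual (MvPolynomial (Fin r) ℂ ⧸ I) I.Cotangent) ⧸
        LinearMap.range dbar.dualMap)
      = (r - 1) * r * (r + 2) / 2 := by
  let E := LinearEquiv.ofBijective (coord I hI) ⟨coord_injective hr hI, coord_surjective hI⟩
  let N := (LinearMap.range dbar.dualMap).restrictScalars ℂ
  have hN : N.map (E : _ →ₗ[ℂ] _) = LinearMap.range (LL r) := by
    ext v
    constructor
    · rintro ⟨_, ⟨ψ, rfl⟩, rfl⟩
      obtain ⟨l, rfl⟩ := (LinearMap.liftBaseChangeEquiv (MvPolynomial (Fin r) ℂ ⧸ I)).surjective ψ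
      exact ⟨_, (coord_dual I hI dbar hdbar l).symm⟩
    · rintro ⟨β, rfl⟩
      let D := MvPolynomial.mkDerivation ℂ
        (fun i => Ideal.Quotient.mk I (MvPolynomial.C (β i)))
      refine ⟨dbar.dualMap (D.liftKaehlerDifferential.liftBaseChange _), ⟨_, rfl⟩, ?_⟩
      refine (coord_dual I hI dbar hdbar D.liftKaehlerDifferential).trans ?_
      congr 1
      funext i
      rw [Derivation.liftKaehlerDifferential_comp_D, MvPolynomial.mkDerivation_X, cf_mk]
      simp
  have e1 := (Submodule.Quotient.restrictScalarsEquiv ℂ (LinearMap.range dbar.dualMap)).finrank_eq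
  have e2 := (Submodule.Quotient.equiv N (LinearMap.range (LL r)) E hN).finrank_eq
  have e3 := Submodule.finrank_quotient_add_finrank (LinearMap.range (LL r))
  rw [LinearMap.finrank_range_of_inj LL_injective] at e3
  simp only [Module.finrank_pi_fintype, Module.finrank_self, Finset.sum_const, Finset.card_univ, card_DD,
    Fintype.card_fin, smul_eq_mul, mul_one] at e3
  rw [← e1, e2]
  obtain ⟨s, rfl⟩ : ∃ s, r = s + 1 := ⟨r - 1, by omega⟩
  have hc : (s + 1 + 1).choose 2 * 2 = (s + 2) * (s + 1) := by
    rw [Nat.choose_two_right, Nat.div_mul_cancel (Nat.even_mul_pred_self _).two_dvd]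
    simp
  symm
  apply Nat.div_eq_of_eq_mul_left (by norm_num)
  simp only [Nat.add_sub_cancel]
  nlinarith
end

section
/- Let r ≥ 3 be an integer, P = MvPolynomial (Fin r) ℂ with variables X_0, …, X_{r−1}, I the ideal of P generated by {X_i X_j : i ≠ j} ∪ {X_i² − X_0² : 0 ≤ i ≤ r−1} ∪ {X_0³}, and A = P/I. Then the ℂ-vector space Derivation ℂ A A of ℂ-linear derivations of A has dimension (r² + r + 2)/2. -/
theorem card_lt_pairs (r : ℕ) :
    2 * Fintype.card {p : Fin r × Fin r // p.1 < p.2} + r = r ^ 2 := by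
  have h1 : Fintype.card {p : Fin r × Fin r // p.1 < p.2} = ∑ i : Fin r, (i : ℕ) := by
    rw [Fintype.card_subtype, ← Finset.univ_product_univ, Finset.card_filter, Finset.sum_product_right]
    refine Finset.sum_congr rfl fun i _ => ?_
    rw [← Finset.card_filter]
    have : Finset.univ.filter (fun x : Fin r => x < i) = Finset.Iio i := by ext; simp
    simp [this]
  rw [h1, Fin.sum_univ_eq_sum_range (fun i => i)]
  have := Finset.sum_range_id_mul_two r
  cases r with
  | zero => simp
  | succ n => simp at this; nlinarith

theorem mul_expand_aux {r : ℕ} {A : Type*} [CommRing A] [Algebra ℂ A]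
    (x : Fin r → A) (s : A)
    (hne : ∀ i j, i ≠ j → x i * x j = 0) (hsq : ∀ i, x i * x i = s) (hxs : ∀ i, x i * s = 0)
    (j : Fin r) (c : ℂ) (m : Fin r → ℂ) (t : ℂ) :
    x j * (algebraMap ℂ A c + ∑ k, m k • x k + t • s) = c • x j + m j • s := by
  rw [mul_add, mul_add, Finset.mul_sum, Finset.sum_eq_single j]
  · rw [mul_smul_comm, mul_smul_comm, hsq, hxs, smul_zero, add_zero, mul_comm, ← Algebra.smul_def]
  · intro b _ hb
    rw [mul_smul_comm, hne _ _ hb.symm, smul_zero]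
  · simp

/-- abstract dimension count -/
theorem finrank_der_aux (r : ℕ) (hr : 2 ≤ r) (z : Fin r) {A : Type*} [CommRing A] [Algebra ℂ A]
    (x : Fin r → A) (s : A) (ε σ : A →ₗ[ℂ] ℂ) (l : Fin r → A →ₗ[ℂ] ℂ)
    (hne : ∀ i j, i ≠ j → x i * x j = 0) (hsq : ∀ i, x i * x i = s) (hxs : ∀ i, x i * s = 0)
    (hexp : ∀ a, a = algebraMap ℂ A (ε a) + ∑ k, l k a • x k + σ a • s)
    (hεx : ∀ i, ε (x i) = 0) (hεs : ε s = 0)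
    (hlx : ∀ k i, l k (x i) = if k = i then 1 else 0) (hls : ∀ k, l k s = 0)
    (hσx : ∀ i, σ (x i) = 0) (hσs : σ s = 1)
    (hlift : ∀ d : Fin r → A, (∀ i j, i ≠ j → x i * d j + x j * d i = 0) →
      (∀ i, x i * d i = x z * d z) → s * d z = 0 → ∃ D : Derivation ℂ A A, ∀ i, D (x i) = d i) :
    Module.finrank ℂ (Derivation ℂ A A) = (r ^ 2 + r + 2) / 2 := by
  let Ψ : Derivation ℂ A A →ₗ[ℂ]
      ((Fin r → ℂ) × ℂ × ({p : Fin r × Fin r // p.1 < p.2} → ℂ)) :=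
    { toFun := fun D => (fun i => σ (D (x i)), l z (D (x z)), fun p => l p.1.2 (D (x p.1.1)))
      map_add' := by intro D E; ext <;> simp
      map_smul' := by intro c D; ext <;> simp }
  have hmul : ∀ j a, x j * a = ε a • x j + l j a • s := by
    intro j a
    conv_lhs => rw [hexp a]
    exact mul_expand_aux x s hne hsq hxs j _ _ _
  have hinj : Function.Injective Ψ := by
    rw [← LinearMap.ker_eq_bot, LinearMap.ker_eq_bot']
    intro D hD
    have h1 : ∀ i, σ (D (x i)) = 0 := fun i => congrFun (congrArg Prod.fst hD) i
    have h2 : l z (D (x z)) = 0 := congrArg (fun q => q.2.1) hD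
    have h3 : ∀ i j, i < j → l j (D (x i)) = 0 := fun i j h =>
      congrFun (congrArg (fun q => q.2.2) hD) ⟨(i, j), h⟩
    have hrel : ∀ i j, i ≠ j → ε (D (x j)) • x i + l i (D (x j)) • s
        + (ε (D (x i)) • x j + l j (D (x i)) • s) = 0 := by
      intro i j hij
      have := congrArg D (hne i j hij)
      rw [D.leibniz, map_zero, smul_eq_mul, smul_eq_mul, hmul, hmul] at this
      exact this
    have hε : ∀ i, ε (D (x i)) = 0 := by
      intro j
      obtain ⟨i, hij⟩ : ∃ i, i ≠ j := by
        have : Nontrivial (Fin r) := Fin.nontrivial_iff_two_le.2 hr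
        exact exists_ne j
      have := congrArg (l i) (hrel i j hij)
      simpa [hlx, hls, hij] using this
    have hsk : ∀ i j, i ≠ j → l i (D (x j)) + l j (D (x i)) = 0 := by
      intro i j hij
      have := congrArg σ (hrel i j hij)
      simpa [hσx, hσs] using this
    have hdiag : ∀ i, l i (D (x i)) = 0 := by
      intro i
      have h := congrArg D ((hsq i).trans (hsq z).symm)
      rw [D.leibniz, D.leibniz, smul_eq_mul, smul_eq_mul, hmul i (D (x i)), hmul z (D (x z)),
        hε, hε, h2] at h
      have := congrArg σ h
      simpa [hσs] using this
    have hl : ∀ i j, l j (D (x i)) = 0 := by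
      intro i j
      rcases lt_trichotomy i j with h | h | h
      · exact h3 i j h
      · subst h; exact hdiag i
      · have := hsk i j h.ne'
        rw [h3 j i h, zero_add] at this
        exact this
    have hx : ∀ i, D (x i) = 0 := by
      intro i
      rw [hexp (D (x i))]
      simp [hε, hl, h1]
    ext a
    rw [hexp a, ← hsq z]
    simp [hx]
  have hsurj : Function.Surjective Ψ := by
    rintro ⟨b, c, m⟩
    let M : Fin r → Fin r → ℂ := fun i j =>
      if h : i < j then m ⟨(i, j), h⟩ else if h : j < i then - m ⟨(j, i), h⟩ else c
    have hM1 : ∀ i, M i i = c := by intro i; simp [M]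
    have hM2 : ∀ i j, i ≠ j → M i j + M j i = 0 := by
      intro i j hij
      rcases lt_or_gt_of_ne hij with h | h
      · simp [M, h, h.not_gt]
      · simp [M, h, h.not_gt]
    let d : Fin r → A := fun i => ∑ k, M i k • x k + b i • s
    have hdε : ∀ i, ε (d i) = 0 := by intro i; simp [d, hεx, hεs]
    have hdl : ∀ i k, l k (d i) = M i k := by intro i k; simp [d, hlx, hls]
    have hdσ : ∀ i, σ (d i) = b i := by intro i; simp [d, hσx, hσs]
    obtain ⟨D, hD⟩ := hlift d
      (by
        intro i j hij
        rw [hmul, hmul, hdε, hdε, hdl, hdl]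
        simp only [zero_smul, zero_add]
        rw [← add_smul, hM2 j i hij.symm, zero_smul])
      (by intro i; rw [hmul, hmul, hdε, hdε, hdl, hdl, hM1, hM1]; simp)
      (by rw [← hsq z, mul_assoc, hmul z (d z), hdε]; simp [hxs])
    refine ⟨D, ?_⟩
    refine Prod.ext ?_ (Prod.ext ?_ ?_)
    · funext i; simp [Ψ, hD, hdσ]
    · simp [Ψ, hD, hdl, hM1]
    · funext ⟨⟨i, j⟩, h⟩
      simp only at h
      simp [Ψ, hD, hdl, M, h]
  rw [(LinearEquiv.ofBijective Ψ ⟨hinj, hsurj⟩).finrank_eq]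
  rw [Module.finrank_prod, Module.finrank_prod, Module.finrank_fintype_fun_eq_card,
    Module.finrank_fintype_fun_eq_card, Module.finrank_self, Fintype.card_fin]
  have := card_lt_pairs r
  omega

theorem exists_functional_quot {σ : Type*} (I : Ideal (MvPolynomial σ ℂ))
    (f : MvPolynomial σ ℂ →ₗ[ℂ] ℂ) (hf : ∀ p ∈ I, f p = 0) :
    ∃ g : (MvPolynomial σ ℂ ⧸ I) →ₗ[ℂ] ℂ, ∀ p, g (Ideal.Quotient.mk I p) = f p := by
  obtain ⟨t, ht⟩ := (Ideal.Quotient.mkₐ ℂ I).toLinearMap.exists_rightInverse_of_surjective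
    (LinearMap.range_eq_top.2 (Ideal.Quotient.mkₐ_surjective ℂ I))
  refine ⟨f ∘ₗ t, fun p => ?_⟩
  have h : Ideal.Quotient.mk I (t (Ideal.Quotient.mk I p)) = Ideal.Quotient.mk I p :=
    LinearMap.congr_fun ht (Ideal.Quotient.mk I p)
  have := hf _ (Ideal.Quotient.eq.1 h)
  rw [map_sub, sub_eq_zero] at this
  exact this

theorem vanish_on_span {R : Type*} [CommRing R] [Algebra ℂ R] (S : Set R) (f : R →ₗ[ℂ] ℂ)
    (h : ∀ g ∈ S, ∀ p, f (p * g) = 0) : ∀ q ∈ Ideal.span S, f q = 0 := by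
  intro q hq
  have : ∀ p, f (p * q) = 0 := by
    induction hq using Submodule.span_induction with
    | mem x hx => exact h x hx
    | zero => simp
    | add x y _ _ hx hy => intro p; rw [mul_add, map_add, hx, hy, add_zero]
    | smul a x _ hx => intro p; rw [smul_eq_mul, ← mul_assoc]; exact hx _
  simpa using this 1

/-- restriction to the `k`-th axis -/
noncomputable def axisMap {r : ℕ} (k : Fin r) : MvPolynomial (Fin r) ℂ →ₐ[ℂ] Polynomial ℂ :=
  MvPolynomial.aeval (fun i => if i = k then Polynomial.X else 0)

theorem axisMap_X {r : ℕ} (k i : Fin r) :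
    axisMap k (MvPolynomial.X i) = if i = k then Polynomial.X else 0 := by
  simp [axisMap]

theorem axisMap_coeff_zero {r : ℕ} (k : Fin r) (p : MvPolynomial (Fin r) ℂ) :
    (axisMap k p).coeff 0 = MvPolynomial.constantCoeff p := by
  induction p using MvPolynomial.induction_on with
  | C a => simp [axisMap]
  | add p q hp hq => simp [hp, hq]
  | mul_X p i hp => 
    rw [map_mul, axisMap_X, Polynomial.mul_coeff_zero]
    split_ifs <;> simp

noncomputable def epsP (r : ℕ) : MvPolynomial (Fin r) ℂ →ₗ[ℂ] ℂ where
  toFun p := MvPolynomial.constantCoeff p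
  map_add' := by simp
  map_smul' := by simp

theorem epsP_apply {r : ℕ} (p : MvPolynomial (Fin r) ℂ) :
    epsP r p = MvPolynomial.constantCoeff p := rfl

noncomputable def lamP {r : ℕ} (k : Fin r) : MvPolynomial (Fin r) ℂ →ₗ[ℂ] ℂ :=
  Polynomial.lcoeff ℂ 1 ∘ₗ (axisMap k).toLinearMap

noncomputable def sigP (r : ℕ) : MvPolynomial (Fin r) ℂ →ₗ[ℂ] ℂ :=
  ∑ k : Fin r, Polynomial.lcoeff ℂ 2 ∘ₗ (axisMap k).toLinearMap

theorem epsP_mul_X {r : ℕ} (p : MvPolynomial (Fin r) ℂ) (i : Fin r) :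
    epsP r (p * MvPolynomial.X i) = 0 := by simp [epsP_apply]

theorem lamP_mul_X {r : ℕ} (p : MvPolynomial (Fin r) ℂ) (i k : Fin r) :
    lamP k (p * MvPolynomial.X i) = if k = i then epsP r p else 0 := by
  by_cases h : k = i
  · subst h; simp [lamP, axisMap_X, epsP_apply, axisMap_coeff_zero, Polynomial.coeff_mul_X]
  · simp [lamP, axisMap_X, h, Ne.symm h]

theorem sigP_mul_X {r : ℕ} (p : MvPolynomial (Fin r) ℂ) (i : Fin r) :
    sigP r (p * MvPolynomial.X i) = lamP i p := by
  have : ∀ k : Fin r, ((axisMap k p) * (axisMap k (MvPolynomial.X i))).coeff 2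
      = if k = i then lamP i p else 0 := by
    intro k
    by_cases h : k = i
    · subst h; simp [lamP, axisMap_X, Polynomial.coeff_mul_X]
    · simp [axisMap_X, h, Ne.symm h]
  simp [sigP, this]

theorem C_vals {r : ℕ} (a : ℂ) : epsP r (MvPolynomial.C a) = a ∧
    (∀ k : Fin r, lamP k (MvPolynomial.C a) = 0) ∧ sigP r (MvPolynomial.C a) = 0 := by
  refine ⟨by simp [epsP_apply], fun k => ?_, ?_⟩
  · simp [lamP, axisMap, Polynomial.coeff_C]
  · simp [sigP, axisMap, Polynomial.coeff_C]

/-- For `r ≥ 3`, `P = ℂ[X_0,…,X_{r−1}]`, `I = (X_iX_j (i≠j), X_i² − X_0², X_0³)`, and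
`A = P/I` (the Gorenstein fat point), the space of ℂ-linear derivations of `A` has
dimension `(r² + r + 2)/2`. -/
theorem stmt_8 (r : ℕ) (hr : 3 ≤ r)
    (I : Ideal (MvPolynomial (Fin r) ℂ))
    (hI : I = Ideal.span
      ({p : MvPolynomial (Fin r) ℂ | ∃ i j : Fin r, i ≠ j ∧ p = MvPolynomial.X i * MvPolynomial.X j}
        ∪ {p : MvPolynomial (Fin r) ℂ | ∃ i : Fin r,
            p = MvPolynomial.X i ^ 2 - MvPolynomial.X (⟨0, by omega⟩ : Fin r) ^ 2}
        ∪ {MvPolynomial.X (⟨0, by omega⟩ : Fin r) ^ 3})) :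
    Module.finrank ℂ
      (Derivation ℂ (MvPolynomial (Fin r) ℂ ⧸ I) (MvPolynomial (Fin r) ℂ ⧸ I))
      = (r ^ 2 + r + 2) / 2 := by
  set z : Fin r := ⟨0, by omega⟩ with hz
  have hone := C_vals (r := r) 1
  rw [map_one] at hone
  obtain ⟨hone1, hone2, hone3⟩ := hone
  have lamX : ∀ k i : Fin r, lamP k (MvPolynomial.X i) = if k = i then 1 else 0 := by
    intro k i; rw [← one_mul (MvPolynomial.X i), lamP_mul_X, hone1]
  have hgen : ∀ f : MvPolynomial (Fin r) ℂ →ₗ[ℂ] ℂ,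
      (∀ p (i j : Fin r), i ≠ j → f (p * MvPolynomial.X i * MvPolynomial.X j) = 0) →
      (∀ p (i : Fin r), f (p * MvPolynomial.X i * MvPolynomial.X i)
        = f (p * MvPolynomial.X z * MvPolynomial.X z)) →
      (∀ p, f (p * MvPolynomial.X z * MvPolynomial.X z * MvPolynomial.X z) = 0) →
      ∀ p ∈ I, f p = 0 := by
    intro f h1 h2 h3
    rw [hI]
    apply vanish_on_span
    rintro g ((⟨i, j, hij, rfl⟩ | ⟨i, rfl⟩) | rfl) p
    · rw [← mul_assoc]; exact h1 p i j hij
    · rw [mul_sub, map_sub, sub_eq_zero, pow_two, pow_two, ← mul_assoc, ← mul_assoc]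
      exact h2 p i
    · rw [pow_succ, pow_two, ← mul_assoc, ← mul_assoc]; exact h3 p
  obtain ⟨ε, hε⟩ := exists_functional_quot I (epsP r) (hgen _
    (fun p i j _ => epsP_mul_X _ _) (fun p i => by rw [epsP_mul_X, epsP_mul_X])
    (fun p => epsP_mul_X _ _))
  have hl : ∀ k : Fin r, ∃ g : (MvPolynomial (Fin r) ℂ ⧸ I) →ₗ[ℂ] ℂ,
      ∀ p, g (Ideal.Quotient.mk I p) = lamP k p := fun k =>
    exists_functional_quot I (lamP k) (hgen _
      (fun p i j _ => by simp [lamP_mul_X, epsP_mul_X])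
      (fun p i => by simp [lamP_mul_X, epsP_mul_X])
      (fun p => by simp [lamP_mul_X, epsP_mul_X]))
  choose l hl using hl
  obtain ⟨σ, hσ⟩ := exists_functional_quot I (sigP r) (hgen _
      (fun p i j hij => by simp [sigP_mul_X, lamP_mul_X, hij.symm])
      (fun p i => by simp [sigP_mul_X, lamP_mul_X])
      (fun p => by simp [sigP_mul_X, lamP_mul_X, epsP_mul_X]))
  let x : Fin r → (MvPolynomial (Fin r) ℂ ⧸ I) := fun i => Ideal.Quotient.mk I (MvPolynomial.X i)
  have hne : ∀ i j, i ≠ j → x i * x j = 0 := by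
    intro i j hij
    rw [← map_mul, Ideal.Quotient.eq_zero_iff_mem, hI]
    exact Ideal.subset_span (Or.inl (Or.inl ⟨i, j, hij, rfl⟩))
  have hsq : ∀ i, x i * x i = x z * x z := by
    intro i
    rw [← map_mul, ← map_mul, Ideal.Quotient.eq, hI, ← pow_two, ← pow_two]
    exact Ideal.subset_span (Or.inl (Or.inr ⟨i, rfl⟩))
  have hxs : ∀ i, x i * (x z * x z) = 0 := by
    intro i
    have : Nontrivial (Fin r) := Fin.nontrivial_iff_two_le.2 (by omega)
    obtain ⟨j, hj⟩ := exists_ne i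
    rw [← hsq j, ← mul_assoc, hne i j hj.symm, zero_mul]
  refine finrank_der_aux r (by omega) z x (x z * x z) ε σ l hne hsq hxs ?_ ?_ ?_ ?_ ?_ ?_ ?_ ?_
  · intro a
    obtain ⟨p, rfl⟩ := Ideal.Quotient.mk_surjective a
    simp only [hε, hl, hσ]
    induction p using MvPolynomial.induction_on with
    | C a =>
      obtain ⟨c1, c2, c3⟩ := C_vals (r := r) a
      simp only [c1, c2, c3, zero_smul, Finset.sum_const_zero, add_zero]
      rfl
    | add p q hp hq =>
      rw [map_add, hp, hq]
      simp only [map_add, add_smul, Finset.sum_add_distrib]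
      ring
    | mul_X p i hp =>
      have := mul_expand_aux x (x z * x z) hne hsq hxs i (epsP r p) (fun k => lamP k p) (sigP r p)
      rw [← hp] at this
      rw [map_mul, mul_comm]
      refine this.trans ?_
      simp [epsP_mul_X, lamP_mul_X, sigP_mul_X]
  · intro i
    rw [hε, ← one_mul (MvPolynomial.X i), epsP_mul_X]
  · rw [← map_mul, hε, epsP_mul_X]
  · intro k i
    rw [hl, lamX]
  · intro k
    rw [← map_mul, hl, lamP_mul_X, ← one_mul (MvPolynomial.X z), epsP_mul_X, ite_self]
  · intro i
    rw [hσ, ← one_mul (MvPolynomial.X i), sigP_mul_X, hone2]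
  · rw [← map_mul, hσ, sigP_mul_X, lamX, if_pos rfl]
  · intro d h1 h2 h3
    choose e he using fun i => Ideal.Quotient.mk_surjective (I := I) (d i)
    let D0 : Derivation ℂ (MvPolynomial (Fin r) ℂ) (MvPolynomial (Fin r) ℂ) :=
      MvPolynomial.mkDerivation ℂ e
    have hD0 : ∀ i, D0 (MvPolynomial.X i) = e i := fun i => MvPolynomial.mkDerivation_X ℂ e i
    have key : ∀ q ∈ I, Ideal.Quotient.mk I (D0 q) = 0 := by
      intro q hq
      have hq' := hq
      rw [hI] at hq'
      induction hq' using Submodule.span_induction with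
      | mem g hg =>
        rcases hg with (⟨i, j, hij, rfl⟩ | ⟨i, rfl⟩) | rfl
        · rw [D0.leibniz, hD0, hD0, smul_eq_mul, smul_eq_mul, map_add, map_mul, map_mul, he, he]
          exact h1 i j hij
        · rw [pow_two, pow_two, map_sub, D0.leibniz, D0.leibniz, hD0, hD0]
          simp only [smul_eq_mul, map_add, map_sub, map_mul, he]
          have : x i * d i + x i * d i - (x z * d z + x z * d z) = 0 := by rw [h2 i]; ring
          exact this
        · rw [D0.leibniz_pow, hD0]
          simp only [smul_eq_mul, nsmul_eq_mul, map_mul, map_pow, he]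
          have : ((Ideal.Quotient.mk I) ((3 : ℕ) : MvPolynomial (Fin r) ℂ)) *
            (x z ^ 2 * d z) = 0 := by rw [pow_two, h3, mul_zero]
          exact this
      | zero => simp
      | add a b ha hb iha ihb =>
        replace ha : a ∈ I := hI ▸ ha
        replace hb : b ∈ I := hI ▸ hb
        rw [map_add, map_add, iha ha, ihb hb, add_zero]
      | smul c a ha iha =>
        replace ha : a ∈ I := hI ▸ ha
        rw [smul_eq_mul, D0.leibniz, map_add, smul_eq_mul, smul_eq_mul, map_mul, map_mul, iha ha,
          Ideal.Quotient.eq_zero_iff_mem.2 ha]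
        simp
    refine ⟨Derivation.liftOfSurjective (f := Ideal.Quotient.mkₐ ℂ I)
      (Ideal.Quotient.mkₐ_surjective ℂ I) (d := D0)
      (fun q hq => key q (Ideal.Quotient.eq_zero_iff_mem.1 hq)), fun i => ?_⟩
    refine (Derivation.liftOfSurjective_apply (f := Ideal.Quotient.mkₐ ℂ I) _ _
      (MvPolynomial.X i)).trans ?_
    rw [hD0]
    exact he i
end

section
/- Let r ≥ 1 be an integer, P = MvPolynomial (Fin r) ℂ with variables X_0, …, X_{r−1}, I the ideal of P generated by {X_i X_j : i ≠ j} ∪ {X_i² − X_0² : 0 ≤ i ≤ r−1} ∪ {X_0³}, and A = P/I. Then the annihilator {a ∈ A : x̄_i · a = 0 for all i} of the maximal ideal (generated by the images x̄_i of the variables) is a one-dimensional ℂ-vector space, spanned by the image of X_0². -/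
open MvPolynomial in
lemma aux_coeff_single {r : ℕ} (i j : Fin r) (q : MvPolynomial (Fin r) ℂ) :
    coeff (Finsupp.single i 1) (q * X j) = if i = j then coeff 0 q else 0 := by
  rw [coeff_mul_X']
  by_cases h : i = j
  · subst h; simp
  · have : j ∉ (Finsupp.single i 1 : Fin r →₀ ℕ).support := by
      simpa using Ne.symm h
    rw [if_neg this, if_neg h]

open MvPolynomial in
lemma aux_phi {r : ℕ} (j : Fin r) (q : MvPolynomial (Fin r) ℂ) :
    ∑ k : Fin r, coeff (Finsupp.single k 2) (q * X j) = coeff (Finsupp.single j 1) q := by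
  rw [Finset.sum_eq_single j]
  · rw [coeff_mul_X']
    have : (Finsupp.single j 2 : Fin r →₀ ℕ) - Finsupp.single j 1 = Finsupp.single j 1 := by
      rw [← Finsupp.single_tsub]
    simp [this]
  · intro b _ hb
    rw [coeff_mul_X']
    have : j ∉ (Finsupp.single b 2 : Fin r →₀ ℕ).support := by
      simpa using hb.symm
    rw [if_neg this]
  · simp

open MvPolynomial in
lemma aux_zero {r : ℕ} (j : Fin r) (q : MvPolynomial (Fin r) ℂ) :
    coeff 0 (q * X j) = 0 := by
  rw [coeff_mul_X']; simp

open MvPolynomial in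
lemma aux_nf {r : ℕ} {A : Type*} [CommRing A] [Algebra ℂ A] (o : Fin r)
    (f : MvPolynomial (Fin r) ℂ →ₐ[ℂ] A)
    (h1 : ∀ i j, i ≠ j → f (X i) * f (X j) = 0)
    (h2 : ∀ i, f (X i) ^ 2 = f (X o) ^ 2) (h3 : f (X o) ^ 3 = 0)
    (p : MvPolynomial (Fin r) ℂ) :
    ∃ (c : ℂ) (b : Fin r → ℂ) (d : ℂ), f p = f (C c + ∑ j, C (b j) * X j + C d * X o ^ 2) := by
  induction p using MvPolynomial.induction_on with
  | C a => exact ⟨a, 0, 0, by simp⟩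
  | add p q hp hq =>
    obtain ⟨c, b, d, h⟩ := hp
    obtain ⟨c', b', d', h'⟩ := hq
    refine ⟨c + c', b + b', d + d', ?_⟩
    rw [map_add, h, h', ← map_add]
    congr 1
    simp only [Pi.add_apply, C_add, add_mul, Finset.sum_add_distrib]
    ring
  | mul_X p i hp =>
    obtain ⟨c, b, d, h⟩ := hp
    refine ⟨0, Pi.single i c, b i, ?_⟩
    have e1 : f (X o) ^ 2 * f (X i) = 0 := by
      by_cases hi : i = o
      · subst hi; rw [← h3]; ring
      · rw [pow_two, mul_assoc, h1 o i (Ne.symm hi), mul_zero]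
    have e2 : (∑ j, f (C (b j)) * f (X j)) * f (X i) = f (C (b i)) * f (X o) ^ 2 := by
      rw [Finset.sum_mul, Finset.sum_eq_single i]
      · rw [← h2 i]; ring
      · intro j _ hj
        rw [mul_assoc, h1 j i hj, mul_zero]
      · simp
    have e3 : ∑ j, f (C ((Pi.single i c : Fin r → ℂ) j)) * f (X j) = f (C c) * f (X i) := by
      rw [Finset.sum_eq_single i]
      · simp
      · intro j _ hj
        simp [hj]
      · simp
    rw [map_mul, h]
    simp only [map_add, map_sum, map_mul, map_pow] at *
    rw [e3, add_mul, add_mul, e2, mul_assoc (f (C d)), e1]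
    simp

/-- For `r ≥ 1`, `P = ℂ[X_0,…,X_{r−1}]`, `I = (X_iX_j (i≠j), X_i² − X_0², X_0³)`, and
`A = P/I`, the annihilator of the maximal ideal (the socle) is one-dimensional over ℂ,
spanned by the image of `X_0²` (which is nonzero). -/
theorem stmt_9 (r : ℕ) (hr : 1 ≤ r)
    (I : Ideal (MvPolynomial (Fin r) ℂ))
    (hI : I = Ideal.span
      ({p : MvPolynomial (Fin r) ℂ | ∃ i j : Fin r, i ≠ j ∧ p = MvPolynomial.X i * MvPolynomial.X j}
        ∪ {p : MvPolynomial (Fin r) ℂ | ∃ i : Fin r,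
            p = MvPolynomial.X i ^ 2 - MvPolynomial.X (⟨0, by omega⟩ : Fin r) ^ 2}
        ∪ {MvPolynomial.X (⟨0, by omega⟩ : Fin r) ^ 3})) :
    {a : MvPolynomial (Fin r) ℂ ⧸ I |
        ∀ i : Fin r, Ideal.Quotient.mk I (MvPolynomial.X i) * a = 0}
      = ↑(Submodule.span ℂ
          {Ideal.Quotient.mk I (MvPolynomial.X (⟨0, by omega⟩ : Fin r) ^ 2)}) ∧
    Ideal.Quotient.mk I (MvPolynomial.X (⟨0, by omega⟩ : Fin r) ^ 2) ≠ 0 := by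
  have hphi : ∀ p ∈ I, ∑ k : Fin r, MvPolynomial.coeff (Finsupp.single k 2) p = 0 := by
    intro p hp
    rw [hI, ← Set.image_id (_ ∪ _), Ideal.span, Submodule.mem_span_image_iff_exists_fun] at hp
    obtain ⟨t, ht, c, rfl⟩ := hp
    simp only [MvPolynomial.coeff_sum]
    rw [Finset.sum_comm]
    refine Finset.sum_eq_zero fun g _ => ?_
    obtain ⟨g, hg⟩ := g
    rcases ht hg with (⟨i, j, hij, rfl⟩ | ⟨i, rfl⟩) | rfl
    · simp only [id, smul_eq_mul, ← mul_assoc]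
      rw [aux_phi, aux_coeff_single, if_neg (Ne.symm hij)]
    · simp only [id, smul_eq_mul, mul_sub, MvPolynomial.coeff_sub, Finset.sum_sub_distrib, pow_two,
        ← mul_assoc]
      simp only [aux_phi, aux_coeff_single, if_true, sub_self]
    · simp only [id, smul_eq_mul, pow_succ, pow_zero, one_mul, ← mul_assoc]
      simp only [aux_phi, aux_coeff_single, if_true, aux_zero]
  have h1 : ∀ i j : Fin r, i ≠ j → Ideal.Quotient.mkₐ ℂ I (MvPolynomial.X i) *
      Ideal.Quotient.mkₐ ℂ I (MvPolynomial.X j) = 0 := by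
    intro i j hij
    rw [← map_mul, Ideal.Quotient.mkₐ_eq_mk, Ideal.Quotient.eq_zero_iff_mem, hI]
    exact Ideal.subset_span (Or.inl (Or.inl ⟨i, j, hij, rfl⟩))
  have h2 : ∀ i : Fin r, Ideal.Quotient.mkₐ ℂ I (MvPolynomial.X i) ^ 2 =
      Ideal.Quotient.mkₐ ℂ I (MvPolynomial.X (⟨0, by omega⟩ : Fin r)) ^ 2 := by
    intro i
    rw [← sub_eq_zero, ← map_pow, ← map_pow, ← map_sub, Ideal.Quotient.mkₐ_eq_mk,
      Ideal.Quotient.eq_zero_iff_mem, hI]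
    exact Ideal.subset_span (Or.inl (Or.inr ⟨i, rfl⟩))
  have h3 : Ideal.Quotient.mkₐ ℂ I (MvPolynomial.X (⟨0, by omega⟩ : Fin r)) ^ 3 = 0 := by
    rw [← map_pow, Ideal.Quotient.mkₐ_eq_mk, Ideal.Quotient.eq_zero_iff_mem, hI]
    exact Ideal.subset_span (Or.inr rfl)
  generalize (⟨0, by omega⟩ : Fin r) = o at *
  have key : ∀ p : MvPolynomial (Fin r) ℂ, Ideal.Quotient.mkₐ ℂ I p = 0 →
      ∑ k : Fin r, MvPolynomial.coeff (Finsupp.single k 2) p = 0 := by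
    intro p hp
    rw [Ideal.Quotient.mkₐ_eq_mk, Ideal.Quotient.eq_zero_iff_mem] at hp
    exact hphi p hp
  have hx : ∀ p, Ideal.Quotient.mk I p = Ideal.Quotient.mkₐ ℂ I p := fun p => rfl
  simp only [hx]
  refine ⟨?_, ?_⟩
  · ext a
    simp only [Set.mem_ofPred_eq, SetLike.mem_coe, Submodule.mem_span_singleton]
    constructor
    · intro ha
      obtain ⟨p, rfl⟩ := Ideal.Quotient.mkₐ_surjective ℂ I a
      obtain ⟨c, b, d, h⟩ := aux_nf o (Ideal.Quotient.mkₐ ℂ I) h1 h2 h3 p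
      rw [h] at ha ⊢
      have hb : ∀ i, b i = 0 := by
        intro i
        have := ha i
        rw [← map_mul, mul_comm] at this
        have := key _ this
        rw [aux_phi] at this
        have hne : (0 : Fin r →₀ ℕ) ≠ Finsupp.single i 1 := by
          intro h0
          have := DFunLike.congr_fun h0 i
          simp at this
        simpa [hne, pow_two, ← mul_assoc, aux_coeff_single, aux_zero, MvPolynomial.coeff_sum,
          MvPolynomial.coeff_C] using this
      have hc : c = 0 := by
        have := congrArg (· * Ideal.Quotient.mkₐ ℂ I (MvPolynomial.X o)) (ha o)
        simp only [zero_mul] at this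
        rw [← map_mul, ← map_mul, mul_comm (MvPolynomial.X o)] at this
        have := key _ this
        rw [aux_phi, aux_coeff_single] at this
        simpa [pow_two, ← mul_assoc, aux_zero, MvPolynomial.coeff_sum] using this
      refine ⟨d, ?_⟩
      rw [← map_smul, MvPolynomial.smul_eq_C_mul]
      simp [hb, hc]
    · rintro ⟨d, rfl⟩ i
      rw [mul_smul_comm, map_pow]
      by_cases hi : i = o
      · subst hi; rw [← pow_succ', h3, smul_zero]
      · rw [pow_two, ← mul_assoc, h1 i o hi, zero_mul, smul_zero]
  · intro h
    have := key _ h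
    rw [pow_two, aux_phi] at this
    simp at this
end

section
/- Let r ≥ 3 be an integer, P = MvPolynomial (Fin r) ℂ with variables X_0, …, X_{r−1}, I the ideal of P generated by {X_i X_j : i ≠ j} ∪ {X_i² − X_0² : 0 ≤ i ≤ r−1} ∪ {X_0³}, and A = P/I. Let d̄ : I/I² → A ⊗_P Ω_{P/ℂ} be the A-linear map induced by the universal derivation d : P → Ω_{P/ℂ}, and let T¹ be the cokernel of the A-linear map Hom_A(A ⊗_P Ω_{P/ℂ}, A) → Hom_A(I/I², A) given by precomposition with d̄. Then dim_ℂ T¹ = (1/6)r(r−1)(r+4). -/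
set_option synthInstance.maxHeartbeats 1000000

open TensorProduct

namespace Fat

section generic

variable {k A M N : Type*} [Field k] [CommRing A] [Algebra k A]
  [AddCommGroup M] [Module k M] [Module A M] [IsScalarTower k A M]
  [AddCommGroup N] [Module k N] [Module A N] [IsScalarTower k A N]

/-- Lifting a `k`-functional on `M` to an `A`-linear map `M → A` along a perfect trace form. -/
theorem exists_lift (l : A →ₗ[k] k)
    (hsurj : ∀ f : A →ₗ[k] k, ∃ b : A, ∀ a, f a = l (a * b))
    (hinj : ∀ b : A, (∀ a, l (a * b) = 0) → b = 0)
    (g : M →ₗ[k] k) : ∃ φ : M →ₗ[A] A, ∀ m, l (φ m) = g m := by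
  have h1 : ∀ m : M, ∃ b : A, ∀ a : A, g (a • m) = l (a * b) := fun m =>
    hsurj (g ∘ₗ ((LinearMap.toSpanSingleton A M m).restrictScalars k))
  choose φ hφ using h1
  have huniq : ∀ b c : A, (∀ a, l (a * b) = l (a * c)) → b = c := by
    intro b c h
    rw [← sub_eq_zero]
    apply hinj
    intro a
    rw [mul_sub, map_sub, h, sub_self]
  refine ⟨{ toFun := φ, map_add' := ?_, map_smul' := ?_ }, ?_⟩
  · intro x y
    apply huniq
    intro a
    rw [← hφ, mul_add, map_add, ← hφ, ← hφ, smul_add, map_add]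
  · intro c x
    apply huniq
    intro a
    rw [← hφ, RingHom.id_apply, smul_eq_mul, ← mul_assoc, ← hφ, mul_smul]
  · intro m
    have := hφ m 1
    simpa using this.symm

theorem finrank_coker (l : A →ₗ[k] k)
    (hsurj : ∀ f : A →ₗ[k] k, ∃ b : A, ∀ a, f a = l (a * b))
    (hinj : ∀ b : A, (∀ a, l (a * b) = 0) → b = 0)
    (f : M →ₗ[A] N) :
    Module.finrank k (Module.Dual A M ⧸ LinearMap.range f.dualMap)
      = Module.finrank k (LinearMap.ker (f.restrictScalars k)) := by
  let K := LinearMap.ker (f.restrictScalars k)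
  let Θ : Module.Dual A M →ₗ[k] Module.Dual k K :=
    { toFun := fun φ => (l ∘ₗ (φ.restrictScalars k)) ∘ₗ K.subtype
      map_add' := fun x y => by ext; simp
      map_smul' := fun c x => by ext; simp }
  have hΘ : Function.Surjective Θ := by
    intro g
    obtain ⟨g', hg'⟩ := LinearMap.exists_extend g
    obtain ⟨φ, hφ⟩ := exists_lift l hsurj hinj g'
    refine ⟨φ, ?_⟩
    rw [← hg']
    ext x
    exact hφ x
  have hker : LinearMap.ker Θ = (LinearMap.range f.dualMap).restrictScalars k := by
    ext φ
    rw [LinearMap.mem_ker, Submodule.restrictScalars_mem, LinearMap.mem_range]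
    constructor
    · intro h
      have h2 : (l ∘ₗ (φ.restrictScalars k)) ∈ LinearMap.range (f.restrictScalars k).dualMap := by
        rw [LinearMap.range_dualMap_eq_dualAnnihilator_ker, Submodule.mem_dualAnnihilator]
        intro w hw
        exact LinearMap.congr_fun h ⟨w, hw⟩
      obtain ⟨g, hg⟩ := h2
      obtain ⟨ψ, hψ⟩ := exists_lift l hsurj hinj g
      refine ⟨ψ, ?_⟩
      ext m
      rw [← sub_eq_zero]
      apply hinj
      intro a
      have h3 : ∀ m, l (ψ (f m)) = l (φ m) := fun m => by
        rw [hψ]; exact LinearMap.congr_fun hg m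
      have := h3 (a • m)
      simp only [map_smul, smul_eq_mul] at this
      rw [mul_sub, map_sub, LinearMap.dualMap_apply, this, sub_self]
    · rintro ⟨ψ, rfl⟩
      ext ⟨x, hx⟩
      have hx' : f x = 0 := hx
      simp [Θ, hx']
  have e1 := Submodule.Quotient.restrictScalarsEquiv k (LinearMap.range f.dualMap)
  have e2 := (Submodule.quotEquivOfEq _ _ hker.symm).trans (Θ.quotKerEquivOfSurjective hΘ)
  rw [← e1.finrank_eq, e2.finrank_eq, Subspace.dual_finrank_eq]

end generic

section poly

open MvPolynomial

variable {r : ℕ}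

/-- The ideal, with `z` in the role of the index `0`. -/
noncomputable def idl (z : Fin r) : Ideal (MvPolynomial (Fin r) ℂ) := Ideal.span
      ({p : MvPolynomial (Fin r) ℂ | ∃ i j : Fin r, i ≠ j ∧ p = MvPolynomial.X i * MvPolynomial.X j}
        ∪ {p : MvPolynomial (Fin r) ℂ | ∃ i : Fin r,
            p = MvPolynomial.X i ^ 2 - MvPolynomial.X z ^ 2}
        ∪ {MvPolynomial.X z ^ 3})

/-- The socle functional on polynomials. -/
noncomputable def L : MvPolynomial (Fin r) ℂ →ₗ[ℂ] ℂ :=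
  ∑ i, MvPolynomial.lcoeff ℂ (Finsupp.single i 2)

theorem L_apply (p : MvPolynomial (Fin r) ℂ) : L p = ∑ i, coeff (Finsupp.single i 2) p := by
  simp [L]

theorem coeff_zero_mul_X (p : MvPolynomial (Fin r) ℂ) (k : Fin r) :
    coeff 0 (p * X k) = 0 := by
  classical
  simp [coeff_mul_X']

theorem coeff_one_mul_X (p : MvPolynomial (Fin r) ℂ) (i k : Fin r) :
    coeff (Finsupp.single i 1) (p * X k) = if i = k then coeff 0 p else 0 := by
  classical
  rw [coeff_mul_X']
  by_cases h : i = k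
  · subst h; simp
  · have : k ∉ (Finsupp.single i 1).support := by
      simp [Ne.symm h]
    rw [if_neg this, if_neg h]

theorem L_mul_X (p : MvPolynomial (Fin r) ℂ) (k : Fin r) :
    L (p * X k) = coeff (Finsupp.single k 1) p := by
  classical
  rw [L_apply, Finset.sum_eq_single k]
  · rw [coeff_mul_X']
    have : (Finsupp.single k 2 - Finsupp.single k 1 : Fin r →₀ ℕ) = Finsupp.single k 1 := by
      rw [← Finsupp.single_tsub]
    simp [this]
  · intro i _ h
    rw [coeff_mul_X', if_neg]
    simp [h.symm]
  · simp

theorem L_C (a : ℂ) : L (C a : MvPolynomial (Fin r) ℂ) = 0 := by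
  classical
  rw [L_apply]
  apply Finset.sum_eq_zero
  intro i _
  rw [coeff_C, if_neg]
  intro h
  have := DFunLike.congr_fun h i
  simp at this

/-- The conditions cutting out the ideal. -/
def Cond (p : MvPolynomial (Fin r) ℂ) : Prop :=
  coeff 0 p = 0 ∧ (∀ i, coeff (Finsupp.single i 1) p = 0) ∧ L p = 0

theorem Cond.mul {p : MvPolynomial (Fin r) ℂ} (hp : Cond p) (q : MvPolynomial (Fin r) ℂ) :
    Cond (p * q) := by
  induction q using MvPolynomial.induction_on generalizing p with
  | C a =>
    obtain ⟨h0, h1, h2⟩ := hp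
    refine ⟨?_, ?_, ?_⟩
    · simp [mul_comm p, coeff_C_mul, h0]
    · intro i
      simp [mul_comm p, coeff_C_mul, h1]
    · rw [mul_comm, ← smul_eq_C_mul, map_smul, h2, smul_zero]
  | add x y hx hy =>
    obtain ⟨h0, h1, h2⟩ := hx hp
    obtain ⟨h0', h1', h2'⟩ := hy hp
    rw [mul_add]
    refine ⟨?_, ?_, ?_⟩
    · simp [h0, h0']
    · intro i
      simp [h1, h1']
    · rw [map_add, h2, h2', add_zero]
  | mul_X x k hx =>
    obtain ⟨h0, h1, h2⟩ := hx hp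
    rw [← mul_assoc]
    refine ⟨coeff_zero_mul_X _ _, ?_, ?_⟩
    · intro i
      simp [coeff_one_mul_X, h0]
    · rw [L_mul_X, h1]

theorem cond_of_mem (z : Fin r) {p : MvPolynomial (Fin r) ℂ} (hp : p ∈ idl z) : Cond p := by
  classical
  have h1X : ∀ i j : Fin r, coeff (Finsupp.single i 1) (X j : MvPolynomial (Fin r) ℂ)
      = if i = j then 1 else 0 := by
    intro i j
    have := coeff_one_mul_X (1 : MvPolynomial (Fin r) ℂ) i j
    simpa using this
  induction hp using Submodule.span_induction with
  | mem x hx =>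
    rcases hx with (⟨i, j, hij, rfl⟩ | ⟨i, rfl⟩) | rfl
    · refine ⟨coeff_zero_mul_X _ _, ?_, ?_⟩
      · intro a; simp [coeff_one_mul_X]
      · rw [L_mul_X, h1X, if_neg hij.symm]
    · simp only [pow_two]
      refine ⟨?_, ?_, ?_⟩
      · simp [coeff_zero_mul_X]
      · intro a; simp [coeff_one_mul_X]
      · rw [map_sub, L_mul_X, L_mul_X, h1X, h1X]; simp
    · simp only [pow_succ]
      refine ⟨coeff_zero_mul_X _ _, ?_, ?_⟩
      · intro a; simp [coeff_one_mul_X, coeff_zero_mul_X]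
      · rw [L_mul_X, coeff_one_mul_X]; simp
  | zero => exact ⟨by simp, by simp, by simp⟩
  | add x y _ _ hx hy =>
    exact ⟨by simp [hx.1, hy.1], by simp [hx.2.1, hy.2.1], by simp [hx.2.2, hy.2.2]⟩
  | smul a x _ hx => rw [smul_eq_mul, mul_comm]; exact hx.mul a

/-- Normal form modulo the ideal. -/
noncomputable def nf (z : Fin r) (p : MvPolynomial (Fin r) ℂ) : MvPolynomial (Fin r) ℂ :=
  C (coeff 0 p) + ∑ i, C (coeff (Finsupp.single i 1) p) * X i + C (L p) * X z ^ 2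

theorem XX_mem (z : Fin r) {i j : Fin r} (h : i ≠ j) : (X i * X j : MvPolynomial (Fin r) ℂ) ∈ idl z :=
  Ideal.subset_span (Or.inl (Or.inl ⟨i, j, h, rfl⟩))

theorem sq_mem (z : Fin r) (i j : Fin r) : (X i ^ 2 - X j ^ 2 : MvPolynomial (Fin r) ℂ) ∈ idl z := by
  have h1 : (X i ^ 2 - X z ^ 2 : MvPolynomial (Fin r) ℂ) ∈ idl z :=
    Ideal.subset_span (Or.inl (Or.inr ⟨i, rfl⟩))
  have h2 : (X j ^ 2 - X z ^ 2 : MvPolynomial (Fin r) ℂ) ∈ idl z :=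
    Ideal.subset_span (Or.inl (Or.inr ⟨j, rfl⟩))
  have := sub_mem h1 h2
  simpa using this

theorem cube_mem (z : Fin r) (k : Fin r) : (X z ^ 2 * X k : MvPolynomial (Fin r) ℂ) ∈ idl z := by
  by_cases h : z = k
  · subst h
    rw [← pow_succ]
    exact Ideal.subset_span (Or.inr rfl)
  · rw [pow_two, mul_assoc]
    exact Ideal.mul_mem_left _ _ (XX_mem z h)

theorem sub_nf_mem (z : Fin r) (p : MvPolynomial (Fin r) ℂ) : p - nf z p ∈ idl z := by
  classical
  induction p using MvPolynomial.induction_on with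
  | C a =>
    have : ∀ i : Fin r, coeff (Finsupp.single i 1) (C a : MvPolynomial (Fin r) ℂ) = 0 := by
      intro i
      rw [coeff_C, if_neg]
      intro h
      have := DFunLike.congr_fun h i
      simp at this
    have : nf z (C a) = C a := by simp [nf, L_C, this]
    rw [this, sub_self]
    exact zero_mem _
  | add x y hx hy =>
    have : nf z (x + y) = nf z x + nf z y := by
      simp only [nf, coeff_add, map_add, add_mul, Finset.sum_add_distrib]; ring
    rw [this]
    have h := add_mem hx hy
    convert h using 1
    ring
  | mul_X p k hp =>
    have h1 : nf z (p * X k) = C (coeff 0 p) * X k + C (coeff (Finsupp.single k 1) p) * X z ^ 2 := by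
      unfold nf
      rw [coeff_zero_mul_X, L_mul_X]
      simp only [coeff_one_mul_X]
      rw [Finset.sum_eq_single k]
      · simp
      · intro i _ h
        simp [h]
      · simp
    have h2 : p * X k - nf z (p * X k) = (p - nf z p) * X k +
        ((∑ i, C (coeff (Finsupp.single i 1) p) * X i) * X k
          - C (coeff (Finsupp.single k 1) p) * X z ^ 2) + C (L p) * (X z ^ 2 * X k) := by
      rw [h1, nf]; ring
    rw [h2]
    refine add_mem (add_mem (Ideal.mul_mem_right _ _ hp) ?_) (Ideal.mul_mem_left _ _ (cube_mem z k))
    rw [← Finset.add_sum_erase _ _ (Finset.mem_univ k), add_mul, add_sub_right_comm]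
    refine add_mem ?_ ?_
    · have := Ideal.mul_mem_left _ (C (coeff (Finsupp.single k 1) p)) (sq_mem z k z)
      convert this using 1
      ring
    · rw [Finset.sum_mul]
      refine sum_mem ?_
      intro i hi
      rw [mul_assoc]
      exact Ideal.mul_mem_left _ _ (XX_mem z (Finset.ne_of_mem_erase hi))

theorem mem_idl_iff (z : Fin r) (p : MvPolynomial (Fin r) ℂ) : p ∈ idl z ↔ Cond p := by
  refine ⟨cond_of_mem z, fun ⟨h0, h1, h2⟩ => ?_⟩
  have := sub_nf_mem z p
  simpa [nf, h0, h1, h2] using this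

theorem single_degree_le {m : Fin r →₀ ℕ} (h : m.degree < 2) : m = 0 ∨ ∃ i, m = Finsupp.single i 1 := by
  rcases Nat.lt_succ_iff_lt_or_eq.mp h with h | h
  · left
    exact (Finsupp.degree_eq_zero_iff m).mp (by omega)
  · right
    have hm0 : m ≠ 0 := by
      rintro rfl
      simp at h
    obtain ⟨i, hi⟩ := Finsupp.support_nonempty_iff.mpr hm0
    have hle : Finsupp.single i 1 ≤ m := by
      rw [Finsupp.single_le_iff]
      exact Nat.one_le_iff_ne_zero.mpr (Finsupp.mem_support_iff.mp hi)
    obtain ⟨n, rfl⟩ := exists_add_of_le hle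
    rw [map_add, Finsupp.degree_single] at h
    have hn : n = 0 := (Finsupp.degree_eq_zero_iff n).mp (by omega)
    exact ⟨i, by rw [hn, add_zero]⟩

theorem idl_le (z : Fin r) : idl z ≤ idealOfVars (Fin r) ℂ ^ 2 := by
  intro p hp
  obtain ⟨h0, h1, -⟩ := cond_of_mem z hp
  rw [mem_pow_idealOfVars_iff']
  intro m hm
  rcases single_degree_le hm with rfl | ⟨i, rfl⟩
  · exact h0
  · exact h1 i

theorem le_idl (z : Fin r) : idealOfVars (Fin r) ℂ ^ 3 ≤ idl z := by
  intro p hp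
  rw [mem_pow_idealOfVars_iff'] at hp
  rw [mem_idl_iff]
  refine ⟨hp _ (by simp), fun i => hp _ (by simp), ?_⟩
  rw [L_apply]
  exact Finset.sum_eq_zero fun i _ => hp _ (by simp)

theorem quartic_mem (hr : 3 ≤ r) (z : Fin r) (a b c d : Fin r) :
    (X a * X b * X c * X d : MvPolynomial (Fin r) ℂ) ∈ idl z ^ 2 := by
  have key : ∀ a b c d : Fin r, a ≠ b → c ≠ d →
      (X a * X b * X c * X d : MvPolynomial (Fin r) ℂ) ∈ idl z ^ 2 := by
    intro a b c d h1 h2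
    rw [pow_two, mul_assoc]
    exact Ideal.mul_mem_mul (XX_mem z h1) (XX_mem z h2)
  have ex1 : ∀ a b : Fin r, ∃ k, k ≠ a ∧ k ≠ b := by
    intro a b
    have : ({a, b} : Finset (Fin r)).card < (Finset.univ : Finset (Fin r)).card := by
      have := Finset.card_le_two (a := a) (b := b)
      simp; omega
    obtain ⟨k, -, hk⟩ := Finset.exists_mem_notMem_of_card_lt_card this
    simp at hk
    exact ⟨k, hk.1, hk.2⟩
  -- three equal
  have key3 : ∀ a b : Fin r, (X a ^ 3 * X b : MvPolynomial (Fin r) ℂ) ∈ idl z ^ 2 := by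
    intro a b
    by_cases hab : a = b
    · subst hab
      obtain ⟨j, hj, -⟩ := ex1 a a
      obtain ⟨k, hk, hkj⟩ := ex1 a j
      have h1 : ((X a ^ 2 - X j ^ 2) * (X a ^ 2 - X k ^ 2) : MvPolynomial (Fin r) ℂ) ∈ idl z ^ 2 := by
        rw [pow_two (idl z)]
        exact Ideal.mul_mem_mul (sq_mem z _ _) (sq_mem z _ _)
      have h2 := sub_mem (add_mem (add_mem h1 (key a k a k hk.symm hk.symm))
        (key a j a j hj.symm hj.symm)) (key j k j k hkj.symm hkj.symm)
      convert h2 using 1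
      ring
    · obtain ⟨k, hk, hkb⟩ := ex1 a b
      have h1 : ((X a ^ 2 - X k ^ 2) * (X a * X b) : MvPolynomial (Fin r) ℂ) ∈ idl z ^ 2 := by
        rw [pow_two (idl z)]
        exact Ideal.mul_mem_mul (sq_mem z _ _) (XX_mem z hab)
      have h2 := add_mem h1 (key k a k b hk hkb)
      convert h2 using 1
      ring
  by_cases h1 : a ≠ b ∧ c ≠ d
  · exact key a b c d h1.1 h1.2
  by_cases h2 : a ≠ c ∧ b ≠ d
  · have := key a c b d h2.1 h2.2
    convert this using 1
    ring
  by_cases h3 : a ≠ d ∧ b ≠ c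
  · have := key a d b c h3.1 h3.2
    convert this using 1
    ring
  have h4 : (a = b ∧ b = c) ∨ (a = b ∧ b = d) ∨ (a = c ∧ c = d) ∨ (b = c ∧ c = d) := by
    grind
  rcases h4 with ⟨rfl, rfl⟩ | ⟨rfl, rfl⟩ | ⟨rfl, rfl⟩ | ⟨rfl, rfl⟩
  · convert key3 a d using 1; ring
  · convert key3 a c using 1; ring
  · convert key3 a b using 1; ring
  · convert key3 b a using 1; ring

theorem idl_sq (hr : 3 ≤ r) (z : Fin r) : idl z ^ 2 = idealOfVars (Fin r) ℂ ^ 4 := by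
  apply le_antisymm
  · have := Ideal.pow_right_mono (idl_le z) 2
    rwa [← pow_mul] at this
  · have h : idealOfVars (Fin r) ℂ ^ 4 = idealOfVars (Fin r) ℂ * idealOfVars (Fin r) ℂ
      * idealOfVars (Fin r) ℂ * idealOfVars (Fin r) ℂ := by ring
    rw [h, Ideal.span_mul_span', Ideal.span_mul_span', Ideal.span_mul_span', Ideal.span_le]
    rintro _ ⟨_, ⟨_, ⟨_, ⟨a, rfl⟩, _, ⟨b, rfl⟩, rfl⟩, _, ⟨c, rfl⟩, rfl⟩, _, ⟨d, rfl⟩, rfl⟩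
    exact quartic_mem hr z a b c d

/-- The socle functional on the quotient. -/
noncomputable def lam (z : Fin r) : (MvPolynomial (Fin r) ℂ ⧸ idl z) →ₗ[ℂ] ℂ :=
  (((idl z).restrictScalars ℂ).liftQ L (fun _ hp => (cond_of_mem z hp).2.2)) ∘ₗ
    (Submodule.Quotient.restrictScalarsEquiv ℂ (idl z)).symm.toLinearMap

theorem lam_mk (z : Fin r) (p : MvPolynomial (Fin r) ℂ) : lam z (Ideal.Quotient.mk (idl z) p) = L p := rfl

theorem lam_inj (z : Fin r) (b : MvPolynomial (Fin r) ℂ ⧸ idl z) (h : ∀ a, lam z (a * b) = 0) : b = 0 := by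
  obtain ⟨p, rfl⟩ := Ideal.Quotient.mk_surjective b
  rw [Ideal.Quotient.eq_zero_iff_mem, mem_idl_iff]
  have h' : ∀ q, L (p * q) = 0 := by
    intro q
    have := h (Ideal.Quotient.mk _ q)
    rwa [← map_mul, lam_mk, mul_comm] at this
  refine ⟨?_, ?_, ?_⟩
  · have := h' (X z * X z)
    rw [← mul_assoc, L_mul_X, coeff_one_mul_X] at this
    simpa using this
  · intro i
    have := h' (X i)
    rwa [L_mul_X] at this
  · simpa using h' 1

theorem finite_quot (z : Fin r) : Module.Finite ℂ (MvPolynomial (Fin r) ℂ ⧸ idl z) := by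
  let g : (ℂ × (Fin r → ℂ) × ℂ) →ₗ[ℂ] MvPolynomial (Fin r) ℂ :=
    { toFun := fun v => C v.1 + ∑ i, C (v.2.1 i) * X i + C v.2.2 * X z ^ 2
      map_add' := fun x y => by
        simp only [Prod.fst_add, Prod.snd_add, Pi.add_apply, map_add, add_mul, Finset.sum_add_distrib]
        ring
      map_smul' := fun c x => by
        simp only [Prod.smul_fst, Prod.smul_snd, Pi.smul_apply, smul_eq_mul, map_mul, smul_eq_C_mul,
          RingHom.id_apply, mul_add, Finset.mul_sum, mul_assoc] }
  refine Module.Finite.of_surjective ((Ideal.Quotient.mkₐ ℂ (idl z)).toLinearMap ∘ₗ g) ?_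
  intro b
  obtain ⟨p, rfl⟩ := Ideal.Quotient.mk_surjective b
  refine ⟨(coeff 0 p, fun i => coeff (Finsupp.single i 1) p, L p), ?_⟩
  symm
  exact Ideal.Quotient.eq.mpr (sub_nf_mem z p)

theorem lam_surj (z : Fin r) (f : (MvPolynomial (Fin r) ℂ ⧸ idl z) →ₗ[ℂ] ℂ) :
    ∃ b, ∀ a, f a = lam z (a * b) := by
  have := finite_quot z
  let e : (MvPolynomial (Fin r) ℂ ⧸ idl z) →ₗ[ℂ] Module.Dual ℂ (MvPolynomial (Fin r) ℂ ⧸ idl z) :=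
    ((LinearMap.mul ℂ (MvPolynomial (Fin r) ℂ ⧸ idl z)).compr₂ (lam z)).flip
  have he : Function.Injective e := by
    rw [injective_iff_map_eq_zero]
    intro b hb
    exact lam_inj z b fun a => LinearMap.congr_fun hb a
  have he' := (LinearMap.injective_iff_surjective_of_finrank_eq_finrank
    (Subspace.dual_finrank_eq (K := ℂ) (V := (MvPolynomial (Fin r) ℂ ⧸ idl z))).symm).mp he
  obtain ⟨b, hb⟩ := he' f
  exact ⟨b, fun a => by rw [← hb]; rfl⟩

/-- The map whose kernel is the relevant space of cubics. -/
noncomputable def cub : homogeneousSubmodule (Fin r) ℂ 3 →ₗ[ℂ] (Fin r → ℂ) :=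
  LinearMap.pi fun i => (L ∘ₗ (pderiv i).toLinearMap) ∘ₗ (homogeneousSubmodule (Fin r) ℂ 3).subtype

theorem cub_apply (p : homogeneousSubmodule (Fin r) ℂ 3) (i : Fin r) : cub p i = L (pderiv i p.1) := rfl

theorem cub_surj : Function.Surjective (cub (r := r)) := by
  classical
  intro v
  refine ⟨∑ i, (v i / 3) • ⟨X i ^ 3, isHomogeneous_X_pow i 3⟩, ?_⟩
  ext j
  rw [map_sum, Finset.sum_apply, Finset.sum_eq_single j]
  · rw [map_smul, Pi.smul_apply, cub_apply]
    have : pderiv j (X j ^ 3 : MvPolynomial (Fin r) ℂ) = (3 : ℂ) • (X j * X j) := by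
      rw [pderiv_pow, pderiv_X_self, smul_eq_C_mul]
      have h3 : (C 3 : MvPolynomial (Fin r) ℂ) = 3 := map_ofNat C 3
      simp [pow_two, h3]
    rw [this, map_smul, L_mul_X]
    have h1 := coeff_one_mul_X (1 : MvPolynomial (Fin r) ℂ) j j
    rw [one_mul] at h1
    rw [h1]
    simp
  · intro i _ hij
    rw [map_smul, Pi.smul_apply, cub_apply]
    simp [pderiv_pow, pderiv_X_of_ne hij]
  · simp

theorem finrank_homog : Module.finrank ℂ (homogeneousSubmodule (Fin r) ℂ 3) = (r + 2).choose 3 := by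
  classical
  have e1 : Sym (Fin r) 3 ≃ {d : Fin r →₀ ℕ | d.degree = 3} :=
    (Sym.equivNatSum (Fin r) 3)
  haveI : Fintype {d : Fin r →₀ ℕ | d.degree = 3} := Fintype.ofEquiv _ e1
  rw [homogeneousSubmodule_eq_finsupp_supported,
    (AddMonoidAlgebra.supportedEquivFinsupp {d : Fin r →₀ ℕ | d.degree = 3}).finrank_eq,
    Module.finrank_finsupp_self, ← Fintype.card_congr e1, Sym.card_sym_eq_choose]
  simp

theorem finite_homog : Module.Finite ℂ (homogeneousSubmodule (Fin r) ℂ 3) := by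
  classical
  by_cases h : r = 0
  · subst h
    infer_instance
  · apply Module.finite_of_finrank_pos
    rw [finrank_homog]
    exact Nat.choose_pos (by omega)

theorem arith (hr : 3 ≤ r) : (r + 2).choose 3 - r = r * (r - 1) * (r + 4) / 6 := by
  obtain ⟨s, rfl⟩ : ∃ s, r = s + 1 := ⟨r - 1, by omega⟩
  have h : (s + 3).choose 3 * 6 = (s + 3) * (s + 2) * (s + 1) := by
    have := Nat.descFactorial_eq_factorial_mul_choose (s + 3) 3
    simp [Nat.descFactorial, Nat.factorial] at this
    linarith
  have h2 : (s + 1) * (s + 1 - 1) * (s + 1 + 4) = 6 * ((s + 1 + 2).choose 3 - (s + 1)) := by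
    rw [Nat.mul_sub 6]
    have : s + 1 + 2 = s + 3 := rfl
    rw [this, mul_comm 6 ((s + 3).choose 3), h]
    simp only [Nat.add_sub_cancel]
    symm
    apply Nat.sub_eq_of_eq_add
    ring
  rw [h2]
  simp

theorem finrank_ker_cub (hr : 3 ≤ r) :
    Module.finrank ℂ (LinearMap.ker (cub (r := r))) = r * (r - 1) * (r + 4) / 6 := by
  have := finite_homog (r := r)
  have h := LinearMap.finrank_range_add_finrank_ker (cub (r := r))
  rw [LinearMap.range_eq_top.mpr cub_surj, finrank_top, finrank_homog, Module.finrank_fin_fun] at h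
  rw [← arith hr]
  omega

theorem ker_iff (I : Ideal (MvPolynomial (Fin r) ℂ)) (x : MvPolynomial (Fin r) ℂ) :
    (1 : MvPolynomial (Fin r) ℂ ⧸ I) ⊗ₜ[MvPolynomial (Fin r) ℂ]
      (KaehlerDifferential.D ℂ (MvPolynomial (Fin r) ℂ) x) = 0 ↔ ∀ i, pderiv i x ∈ I := by
  let b := (KaehlerDifferential.mvPolynomialBasis ℂ (Fin r)).baseChange (MvPolynomial (Fin r) ℂ ⧸ I)
  rw [← b.repr.map_eq_zero_iff, Finsupp.ext_iff]
  refine forall_congr' fun i => ?_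
  rw [Module.Basis.baseChange_repr_tmul, KaehlerDifferential.mvPolynomialBasis_repr_apply,
    Finsupp.zero_apply, ← Ideal.Quotient.eq_zero_iff_mem, Algebra.smul_def, mul_one]
  rfl

theorem pderiv_mem_of_ker (z : Fin r) {p : homogeneousSubmodule (Fin r) ℂ 3}
    (hp : cub p = 0) (i : Fin r) : pderiv i p.1 ∈ idl z := by
  have h2 : (pderiv i p.1).IsHomogeneous 2 := IsHomogeneous.pderiv p.2
  rw [mem_idl_iff]
  refine ⟨h2.coeff_eq_zero (by simp), fun j => h2.coeff_eq_zero (by simp), ?_⟩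
  exact congrFun hp i

theorem homog_mem (z : Fin r) (p : homogeneousSubmodule (Fin r) ℂ 3) : p.1 ∈ idl z := by
  have h2 : p.1.IsHomogeneous 3 := p.2
  rw [mem_idl_iff]
  refine ⟨h2.coeff_eq_zero (by simp), fun j => h2.coeff_eq_zero (by simp), ?_⟩
  rw [L_apply]
  exact Finset.sum_eq_zero fun i _ => h2.coeff_eq_zero (by simp)

/-- Elements of the ideal with all partial derivatives in the ideal have order at least three. -/
theorem mem_cube (z : Fin r) {x : MvPolynomial (Fin r) ℂ} (hx : x ∈ idl z)
    (hd : ∀ i, pderiv i x ∈ idl z) : x ∈ idealOfVars (Fin r) ℂ ^ 3 := by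
  classical
  rw [mem_pow_idealOfVars_iff']
  intro m hm
  by_cases h2 : m.degree < 2
  · exact (mem_pow_idealOfVars_iff' 2 x).mp (idl_le z hx) m h2
  · have hm0 : m ≠ 0 := by
      rintro rfl
      simp at h2
    obtain ⟨i, hi⟩ := Finsupp.support_nonempty_iff.mpr hm0
    have hle : Finsupp.single i 1 ≤ m := by
      rw [Finsupp.single_le_iff]
      exact Nat.one_le_iff_ne_zero.mpr (Finsupp.mem_support_iff.mp hi)
    obtain ⟨n, rfl⟩ := exists_add_of_le hle
    rw [map_add, Finsupp.degree_single] at hm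
    have hc := (mem_pow_idealOfVars_iff' 2 _).mp (idl_le z (hd i)) n (by omega)
    rw [coeff_pderiv, add_comm n] at hc
    rcases mul_eq_zero.mp hc with h | h
    · exact h
    · exact absurd h (Nat.cast_add_one_ne_zero (n i))

theorem main (hr : 3 ≤ r) (z : Fin r)
    (dbar : (idl z).Cotangent →ₗ[MvPolynomial (Fin r) ℂ ⧸ idl z]
      (MvPolynomial (Fin r) ℂ ⧸ idl z) ⊗[MvPolynomial (Fin r) ℂ]
        (KaehlerDifferential ℂ (MvPolynomial (Fin r) ℂ)))
    (hdbar : ∀ x : idl z, dbar ((idl z).toCotangent x)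
      = 1 ⊗ₜ[MvPolynomial (Fin r) ℂ]
          (KaehlerDifferential.D ℂ (MvPolynomial (Fin r) ℂ) x.1)) :
    Module.finrank ℂ
      ((Module.Dual (MvPolynomial (Fin r) ℂ ⧸ idl z) (idl z).Cotangent) ⧸
        LinearMap.range dbar.dualMap)
      = r * (r - 1) * (r + 4) / 6 := by
  rw [← finrank_ker_cub hr]
  have hT : IsScalarTower ℂ (MvPolynomial (Fin r) ℂ ⧸ idl z) (idl z).Cotangent := by
    refine ⟨fun c a m => ?_⟩
    obtain ⟨p, rfl⟩ := Ideal.Quotient.mk_surjective a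
    have h : ∀ q : MvPolynomial (Fin r) ℂ, Ideal.Quotient.mk (idl z) q • m = q • m := fun q => by
      rw [← mul_one (Ideal.Quotient.mk (idl z) q)]
      exact (smul_assoc q (1 : MvPolynomial (Fin r) ℂ ⧸ idl z) m).trans (by rw [one_smul])
    have h2 : c • Ideal.Quotient.mk (idl z) p = Ideal.Quotient.mk (idl z) (c • p) := rfl
    rw [h2, h, h, smul_assoc]
  refine (finrank_coker (lam z) (lam_surj z) (lam_inj z) dbar).trans ?_
  symm
  let g : LinearMap.ker (cub (r := r)) →ₗ[ℂ] LinearMap.ker (dbar.restrictScalars ℂ) :=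
    { toFun := fun p => ⟨(idl z).toCotangent ⟨p.1.1, homog_mem z p.1⟩, by
        rw [LinearMap.mem_ker, LinearMap.restrictScalars_apply, hdbar, ker_iff]
        exact pderiv_mem_of_ker z p.2⟩
      map_add' := fun x y => by
        apply Subtype.ext
        exact map_add (idl z).toCotangent ⟨x.1.1, homog_mem z x.1⟩ ⟨y.1.1, homog_mem z y.1⟩
      map_smul' := fun c x => by
        apply Subtype.ext
        exact ((idl z).toCotangent.restrictScalars ℂ).map_smul c ⟨x.1.1, homog_mem z x.1⟩ }
  refine (LinearEquiv.ofBijective g ⟨?_, ?_⟩).finrank_eq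
  · rw [injective_iff_map_eq_zero]
    intro p hp
    have h1 : (idl z).toCotangent ⟨p.1.1, homog_mem z p.1⟩ = 0 := congrArg Subtype.val hp
    rw [Ideal.toCotangent_eq_zero, idl_sq hr, mem_pow_idealOfVars_iff'] at h1
    apply Subtype.ext
    apply Subtype.ext
    ext m
    by_cases hm : m.degree < 4
    · exact h1 m hm
    · exact IsHomogeneous.coeff_eq_zero p.1.2 (by omega)
  · rintro ⟨y, hy⟩
    obtain ⟨⟨x, hx⟩, rfl⟩ := (idl z).toCotangent_surjective y
    rw [LinearMap.mem_ker, LinearMap.restrictScalars_apply, hdbar, ker_iff] at hy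
    have hx3 := (mem_pow_idealOfVars_iff' 3 x).mp (mem_cube z hx hy)
    let q : homogeneousSubmodule (Fin r) ℂ 3 :=
      ⟨homogeneousComponent 3 x, homogeneousComponent_isHomogeneous 3 x⟩
    have hsub : q.1 - x ∈ idealOfVars (Fin r) ℂ ^ 4 := by
      rw [mem_pow_idealOfVars_iff']
      intro m hm
      rw [coeff_sub, coeff_homogeneousComponent]
      split_ifs with h
      · exact sub_self _
      · rw [hx3 m (by omega), sub_self]
    have hq : cub q = 0 := by
      ext i
      rw [cub_apply, L_apply, Pi.zero_apply]
      have hL := (cond_of_mem z (hy i)).2.2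
      rw [L_apply] at hL
      rw [← hL]
      refine Finset.sum_congr rfl fun j _ => ?_
      rw [coeff_pderiv, coeff_pderiv]
      congr 1
      have := (mem_pow_idealOfVars_iff' 4 _).mp hsub (Finsupp.single j 2 + Finsupp.single i 1)
        (by simp)
      rwa [coeff_sub, sub_eq_zero] at this
    refine ⟨⟨q, hq⟩, ?_⟩
    apply Subtype.ext
    exact (Ideal.toCotangent_eq _).mpr (by rw [idl_sq hr]; exact hsub)

end poly
end Fat

/-- For `r ≥ 3`, `P = ℂ[X_0,…,X_{r−1}]`, `I = (X_iX_j (i≠j), X_i² − X_0², X_0³)`, `A = P/I`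
(the Gorenstein fat point), and `d̄ : I/I² → A ⊗_P Ω_{P/ℂ}` induced by the universal
derivation, the cokernel `T¹` of `Hom_A(A ⊗_P Ω_{P/ℂ}, A) → Hom_A(I/I², A)`
(precomposition with `d̄`) has `dim_ℂ T¹ = (1/6)r(r−1)(r+4)`. -/
theorem stmt_10 (r : ℕ) (hr : 3 ≤ r)
    (I : Ideal (MvPolynomial (Fin r) ℂ))
    (hI : I = Ideal.span
      ({p : MvPolynomial (Fin r) ℂ | ∃ i j : Fin r, i ≠ j ∧ p = MvPolynomial.X i * MvPolynomial.X j}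
        ∪ {p : MvPolynomial (Fin r) ℂ | ∃ i : Fin r,
            p = MvPolynomial.X i ^ 2 - MvPolynomial.X (⟨0, by omega⟩ : Fin r) ^ 2}
        ∪ {MvPolynomial.X (⟨0, by omega⟩ : Fin r) ^ 3}))
    (dbar : I.Cotangent →ₗ[MvPolynomial (Fin r) ℂ ⧸ I]
      (MvPolynomial (Fin r) ℂ ⧸ I) ⊗[MvPolynomial (Fin r) ℂ]
        (KaehlerDifferential ℂ (MvPolynomial (Fin r) ℂ)))
    (hdbar : ∀ x : I, dbar (I.toCotangent x)
      = 1 ⊗ₜ[MvPolynomial (Fin r) ℂ]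
          (KaehlerDifferential.D ℂ (MvPolynomial (Fin r) ℂ) x.1)) :
    Module.finrank ℂ
      ((Module.Dual (MvPolynomial (Fin r) ℂ ⧸ I) I.Cotangent) ⧸
        LinearMap.range dbar.dualMap)
      = r * (r - 1) * (r + 4) / 6 := by
  subst hI
  exact Fat.main hr _ dbar hdbar
end

section
/- Let r ≥ 1 and m_1, …, m_r ≥ 1 be integers with n = m_1 + ⋯ + m_r ≥ 3. Let P be the polynomial ring over ℂ in the n variables z^{(i)}_a (1 ≤ i ≤ r, 1 ≤ a ≤ m_i), and let I be the ideal of P generated by: (a) for each i with m_i ≥ 2, the 2×2 minors z^{(i)}_a σ_i(b) − z^{(i)}_b σ_i(a) for 1 ≤ a < b ≤ m_i, where σ_i(a) = z^{(i)}_{a+1} for a < m_i and σ_i(m_i) = (z^{(i)}_1)²; and (b) the products z^{(k)}_a z^{(l)}_b for all k ≠ l. Set B = P/I. Let d̄ : I/I² → B ⊗_P Ω_{P/ℂ} be the B-linear map induced by the universal derivation d : P → Ω_{P/ℂ}, and let T¹ be the cokernel of the B-linear map Hom_B(B ⊗_P Ω_{P/ℂ}, B) → Hom_B(I/I², B) given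 by precomposition with d̄. Then dim_ℂ T¹ = n(n−1) − r. -/
set_option synthInstance.maxHeartbeats 1000000

open TensorProduct

namespace RPC

open MvPolynomial

variable {r : ℕ} {m : Fin r → ℕ}

/-- Index set of the variables. -/
abbrev Idx (m : Fin r → ℕ) := (i : Fin r) × Fin (m i)

/-- The polynomial ring. -/
abbrev PP (m : Fin r → ℕ) := MvPolynomial (Idx m) ℂ

/-- Parametrisation of the `i`-th branch. -/
noncomputable def ev (m : Fin r → ℕ) (i : Fin r) : PP m →ₐ[ℂ] Polynomial ℂ :=
  MvPolynomial.aeval (fun x : Idx m => if x.1 = i then Polynomial.X ^ (m i + (x.2 : ℕ)) else 0)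

/-- A polynomial with value `t ^ (m i + a)` on branch `i`. -/
noncomputable def Z (hm : ∀ i, 1 ≤ m i) (i : Fin r) (a : ℕ) : PP m :=
  X ⟨i, ⟨0, hm i⟩⟩ ^ (a / m i) * X ⟨i, ⟨a % m i, Nat.mod_lt _ (hm i)⟩⟩

variable (hm : ∀ i, 1 ≤ m i)

/-- The minors. -/
noncomputable def ff (i : Fin r) (a b : ℕ) : PP m :=
  Z hm i a * Z hm i (b + 1) - Z hm i b * Z hm i (a + 1)

/-- The ideal. -/
noncomputable def II : Ideal (PP m) :=
  Ideal.span ({p | ∃ (i : Fin r) (a b : ℕ), a < b ∧ b < m i ∧ p = ff hm i a b} ∪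
    {p | ∃ (k l : Fin r) (a b : ℕ), k ≠ l ∧ a < m k ∧ b < m l ∧ p = Z hm k a * Z hm l b})

lemma Z_lt (i : Fin r) (a : ℕ) (h : a < m i) : Z hm i a = X ⟨i, ⟨a, h⟩⟩ := by
  simp [Z, Nat.div_eq_of_lt h, Nat.mod_eq_of_lt h]

lemma Z_add (i : Fin r) (a : ℕ) : Z hm i (a + m i) = Z hm i 0 * Z hm i a := by
  have h0 : 0 < m i := hm i
  simp only [Z, Nat.add_div_right _ h0, Nat.add_mod_right, Nat.zero_div, Nat.zero_mod]
  ring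

lemma Z_self (i : Fin r) : Z hm i (m i) = X ⟨i, ⟨0, hm i⟩⟩ ^ 2 := by
  have := Z_add hm i 0
  rw [zero_add] at this
  rw [this, Z_lt hm i 0 (hm i)]; ring

lemma Z_mul_add (i : Fin r) (a q : ℕ) : Z hm i (a + m i * q) = Z hm i 0 ^ q * Z hm i a := by
  induction q with
  | zero => simp
  | succ q ih =>
    rw [Nat.mul_succ, ← add_assoc, Z_add, ih]; ring

lemma ev_X (i : Fin r) (x : Idx m) :
    ev m i (X x) = if x.1 = i then Polynomial.X ^ (m i + (x.2 : ℕ)) else 0 := by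
  simp [ev]

lemma ev_Z (i : Fin r) (a : ℕ) : ev m i (Z hm i a) = Polynomial.X ^ (m i + a) := by
  simp only [Z, map_mul, map_pow, ev_X, if_true]
  rw [← pow_mul, ← pow_add]
  congr 1
  have := Nat.div_add_mod a (m i)
  simp only [add_zero]
  omega

lemma ev_Z_ne {i k : Fin r} (h : k ≠ i) (a : ℕ) : ev m i (Z hm k a) = 0 := by
  simp [Z, ev_X, h]

lemma ev_ff (i k : Fin r) (a b : ℕ) : ev m i (ff hm k a b) = 0 := by
  by_cases h : k = i
  · subst h; simp only [ff, map_sub, map_mul, ev_Z]; ring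
  · simp [ff, ev_Z_ne hm h]

lemma ff_mem (i : Fin r) (a b : ℕ) : ff hm i a b ∈ II hm := by
  have key : ∀ a b, a < m i → b < m i → ff hm i a b ∈ II hm := by
    intro a b ha hb
    rcases lt_trichotomy a b with h | h | h
    · exact Ideal.subset_span (Or.inl ⟨i, a, b, h, hb, rfl⟩)
    · subst h; simp [ff]
    · have : ff hm i a b = - ff hm i b a := by simp only [ff]; ring
      rw [this]
      exact neg_mem (Ideal.subset_span (Or.inl ⟨i, b, a, h, ha, rfl⟩))
  have h0 := hm i
  have e : ff hm i a b = Z hm i 0 ^ (a / m i) * Z hm i 0 ^ (b / m i) *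
      ff hm i (a % m i) (b % m i) := by
    have ea := Z_mul_add hm i (a % m i) (a / m i)
    have eb := Z_mul_add hm i (b % m i) (b / m i)
    have ea' := Z_mul_add hm i (a % m i + 1) (a / m i)
    have eb' := Z_mul_add hm i (b % m i + 1) (b / m i)
    rw [Nat.mod_add_div] at ea eb
    rw [add_right_comm, Nat.mod_add_div] at ea' eb'
    simp only [ff, ea, eb, ea', eb']; ring
  rw [e]
  exact Ideal.mul_mem_left _ _ (key _ _ (Nat.mod_lt _ h0) (Nat.mod_lt _ h0))

lemma cross_mem {k l : Fin r} (h : k ≠ l) (a b : ℕ) : Z hm k a * Z hm l b ∈ II hm := by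
  have ea := Z_mul_add hm k (a % m k) (a / m k)
  have eb := Z_mul_add hm l (b % m l) (b / m l)
  rw [Nat.mod_add_div] at ea eb
  have e : Z hm k a * Z hm l b = Z hm k 0 ^ (a / m k) * Z hm l 0 ^ (b / m l) *
    (Z hm k (a % m k) * Z hm l (b % m l)) := by rw [ea, eb]; ring
  rw [e]
  exact Ideal.mul_mem_left _ _ (Ideal.subset_span
    (Or.inr ⟨k, l, _, _, h, Nat.mod_lt _ (hm k), Nat.mod_lt _ (hm l), rfl⟩))

lemma Z_mul_Z (i : Fin r) (a b : ℕ) :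
    Z hm i a * Z hm i b - Z hm i 0 * Z hm i (a + b) ∈ II hm := by
  induction a generalizing b with
  | zero => simp
  | succ a ih =>
    have h1 := ih (b + 1)
    have h2 := ff_mem hm i a b
    have : Z hm i (a + 1) * Z hm i b - Z hm i 0 * Z hm i (a + 1 + b) =
      (Z hm i a * Z hm i (b + 1) - Z hm i 0 * Z hm i (a + (b + 1))) - ff hm i a b := by
      simp only [ff]
      rw [show a + 1 + b = a + (b + 1) by ring]; ring
    rw [this]; exact sub_mem h1 h2

lemma II_le_ker (i : Fin r) (f : PP m) (hf : f ∈ II hm) : ev m i f = 0 := by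
  have : II hm ≤ RingHom.ker (ev m i) := by
    rw [II, Ideal.span_le]
    rintro p (⟨k, a, b, -, -, rfl⟩ | ⟨k, l, a, b, h, -, -, rfl⟩)
    · exact ev_ff hm i k a b
    · show ev m i _ = 0
      rw [map_mul]
      by_cases hk : k = i
      · subst hk; rw [ev_Z_ne hm (Ne.symm h), mul_zero]
      · rw [ev_Z_ne hm hk, zero_mul]
  exact this hf

/-- The section `t ^ d ↦ Z d`. -/
noncomputable def mu (i : Fin r) : Polynomial ℂ →ₗ[ℂ] PP m :=
  (Polynomial.basisMonomials ℂ).constr ℂ (fun d => Z hm i d)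

lemma mu_monomial (i : Fin r) (d : ℕ) (c : ℂ) :
    mu hm i (Polynomial.monomial d c) = c • Z hm i d := by
  have h : Polynomial.monomial d c = c • Polynomial.basisMonomials ℂ d := by
    simp [Polynomial.smul_monomial]
  rw [h, map_smul, mu, Module.Basis.constr_basis]

lemma ev_mu (i : Fin r) (h : Polynomial ℂ) :
    ev m i (mu hm i h) = Polynomial.X ^ m i * h := by
  induction h using Polynomial.induction_on' with
  | add p q hp hq => simp only [map_add, hp, hq]; ring
  | monomial d c =>
    rw [mu_monomial, map_smul, ev_Z, Polynomial.X_pow_mul_monomial, ← Polynomial.monomial_one_right_eq_X_pow, Polynomial.smul_monomial]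
    simp [add_comm]

lemma ev_mu_ne {i k : Fin r} (hk : k ≠ i) (h : Polynomial ℂ) :
    ev m i (mu hm k h) = 0 := by
  induction h using Polynomial.induction_on' with
  | add p q hp hq => simp only [map_add, hp, hq]; ring
  | monomial d c => rw [mu_monomial, map_smul, ev_Z_ne hm hk, smul_zero]

lemma Z_mul_mu (i : Fin r) (a : ℕ) (h : Polynomial ℂ) :
    Z hm i a * mu hm i h - mu hm i (Polynomial.X ^ (m i + a) * h) ∈ II hm := by
  induction h using Polynomial.induction_on' with
  | add p q hp hq =>
    have := add_mem hp hq
    rw [mul_add, map_add, map_add]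
    convert this using 1; ring
  | monomial d c =>
    rw [Polynomial.X_pow_mul_monomial, mu_monomial, mu_monomial,
      show d + (m i + a) = (a + d) + m i by ring, Z_add, mul_smul_comm, ← smul_sub]
    rw [MvPolynomial.smul_eq_C_mul]
    exact Ideal.mul_mem_left _ _ (Z_mul_Z hm i a d)

lemma Z_mul_mu_ne {i k : Fin r} (hk : k ≠ i) (a : ℕ) (h : Polynomial ℂ) :
    Z hm k a * mu hm i h ∈ II hm := by
  induction h using Polynomial.induction_on' with
  | add p q hp hq =>
    rw [map_add, mul_add]; exact add_mem hp hq
  | monomial d c =>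
    rw [mu_monomial, mul_smul_comm, MvPolynomial.smul_eq_C_mul]
    exact Ideal.mul_mem_left _ _ (cross_mem hm hk a d)

lemma normal_form (p : PP m) : ∃ (c : ℂ) (h : Fin r → Polynomial ℂ),
    (∀ i, ev m i p = Polynomial.C c + Polynomial.X ^ m i * h i) ∧
    p - C c - ∑ i, mu hm i (h i) ∈ II hm := by
  induction p using MvPolynomial.induction_on with
  | C a =>
    refine ⟨a, fun _ => 0, fun i => ?_, ?_⟩
    · simp only [mul_zero, add_zero]; exact (ev m i).commutes a
    · simp
  | add p q hp hq =>
    obtain ⟨c, h, h1, h2⟩ := hp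
    obtain ⟨c', h', h1', h2'⟩ := hq
    refine ⟨c + c', fun i => h i + h' i, fun i => ?_, ?_⟩
    · rw [map_add, h1, h1', map_add]; ring
    · have := add_mem h2 h2'
      simp only [map_add, Finset.sum_add_distrib]
      convert this using 1; ring
  | mul_X p x hp =>
    obtain ⟨c, h, h1, h2⟩ := hp
    obtain ⟨k, a⟩ := x
    refine ⟨0, fun i => if k = i then Polynomial.C c * Polynomial.X ^ (a : ℕ) +
      Polynomial.X ^ (m k + a) * h k else 0, fun i => ?_, ?_⟩
    · rw [map_mul, h1, ev_X]
      by_cases hk : k = i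
      · subst hk; simp; ring
      · simp [hk]
    · have e1 : ∑ i, mu hm i (if k = i then Polynomial.C c * Polynomial.X ^ (a : ℕ) +
          Polynomial.X ^ (m k + a) * h k else 0) = C c * Z hm k a +
          mu hm k (Polynomial.X ^ (m k + a) * h k) := by
        rw [Finset.sum_eq_single k]
        · rw [if_pos rfl, map_add, Polynomial.C_mul_X_pow_eq_monomial, mu_monomial,
            MvPolynomial.smul_eq_C_mul]
        · intro b _ hb; rw [if_neg (Ne.symm hb), map_zero]
        · simp
      rw [e1]
      have hX : (X ⟨k, a⟩ : PP m) = Z hm k a := by rw [Z_lt hm k a a.2]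
      rw [hX]
      have e2 : p * Z hm k a - C 0 - (C c * Z hm k a +
          mu hm k (Polynomial.X ^ (m k + a) * h k)) =
          (p - C c - ∑ i, mu hm i (h i)) * Z hm k a +
          (Z hm k a * mu hm k (h k) - mu hm k (Polynomial.X ^ (m k + a) * h k)) +
          ∑ i ∈ Finset.univ.erase k, Z hm k a * mu hm i (h i) := by
        rw [← Finset.mul_sum, ← Finset.add_sum_erase _ _ (Finset.mem_univ k), map_zero]
        ring
      rw [e2]
      refine add_mem (add_mem (Ideal.mul_mem_right _ _ h2) (Z_mul_mu hm k a _)) ?_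
      refine Ideal.sum_mem _ fun i hi => Z_mul_mu_ne hm ?_ _ _
      exact (Finset.ne_of_mem_erase hi).symm

lemma mem_II_iff (hr : 1 ≤ r) (p : PP m) : p ∈ II hm ↔ ∀ i, ev m i p = 0 := by
  refine ⟨fun h i => II_le_ker hm i p h, fun h => ?_⟩
  obtain ⟨c, g, h1, h2⟩ := normal_form hm p
  have hc : c = 0 := by
    have e := h1 ⟨0, hr⟩
    rw [h] at e
    have e' := congrArg (fun q => Polynomial.coeff q 0) e
    have h0 := hm ⟨0, hr⟩
    have h0' : (0 = m ⟨0, hr⟩) = False := eq_false (by omega)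
    simpa [Polynomial.coeff_X_pow_mul', h0'] using e'.symm
  have hg : ∀ i, g i = 0 := by
    intro i
    have e := h1 i
    rw [h, hc] at e
    simpa using e.symm
  simpa [hc, hg] using h2

lemma exists_ev (hm : ∀ i, 1 ≤ m i) (g : Fin r → Polynomial ℂ) :
    ∃ p : PP m, ∀ i, ev m i p = Polynomial.X ^ m i * g i := by
  refine ⟨∑ k, mu hm k (g k), fun i => ?_⟩
  rw [map_sum, Finset.sum_eq_single i]
  · exact ev_mu hm i _
  · intro b _ hb; exact ev_mu_ne hm hb _
  · simp

/-- The derivation along branch `i` with coefficients `W`. -/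
noncomputable def der (i : Fin r) (W : Idx m → Polynomial ℂ) (f : PP m) : Polynomial ℂ :=
  ∑ x, W x * ev m i (pderiv x f)

lemma der_add (i : Fin r) (W : Idx m → Polynomial ℂ) (f g : PP m) :
    der i W (f + g) = der i W f + der i W g := by
  simp only [der, map_add, mul_add, Finset.sum_add_distrib]

lemma der_sub (i : Fin r) (W : Idx m → Polynomial ℂ) (f g : PP m) :
    der i W (f - g) = der i W f - der i W g := by
  simp only [der, map_sub, mul_sub, Finset.sum_sub_distrib]

lemma der_mul (i : Fin r) (W : Idx m → Polynomial ℂ) (f g : PP m) :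
    der i W (f * g) = ev m i f * der i W g + ev m i g * der i W f := by
  simp only [der, Finset.mul_sum, ← Finset.sum_add_distrib]
  refine Finset.sum_congr rfl fun x _ => ?_
  rw [Derivation.leibniz, map_add, smul_eq_mul, smul_eq_mul, map_mul, map_mul]
  ring

lemma der_X (i : Fin r) (W : Idx m → Polynomial ℂ) (x : Idx m) :
    der i W (X x) = W x := by
  classical
  rw [der, Finset.sum_eq_single x]
  · simp
  · intro y _ hy
    rw [pderiv_X_of_ne (Ne.symm hy), map_zero, mul_zero]
  · simp

lemma der_Z_lt (i : Fin r) (W : Idx m → Polynomial ℂ) (k : Fin r) (a : ℕ) (h : a < m k) :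
    der i W (Z hm k a) = W ⟨k, ⟨a, h⟩⟩ := by
  rw [Z_lt hm k a h, der_X]

lemma der_Z_self (i : Fin r) (W : Idx m → Polynomial ℂ) :
    der i W (Z hm i (m i)) = 2 * Polynomial.X ^ m i * W ⟨i, ⟨0, hm i⟩⟩ := by
  rw [Z_self, pow_two, der_mul, der_X, ev_X]
  simp; ring

lemma der_ff (i : Fin r) (W : Idx m → Polynomial ℂ) (a b : ℕ) :
    der i W (ff hm i a b) = Polynomial.X ^ m i *
      (Polynomial.X ^ a * (der i W (Z hm i (b + 1)) - Polynomial.X * der i W (Z hm i b)) -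
       Polynomial.X ^ b * (der i W (Z hm i (a + 1)) - Polynomial.X * der i W (Z hm i a))) := by
  rw [ff, der_sub, der_mul, der_mul, ev_Z, ev_Z, ev_Z, ev_Z]
  ring

lemma der_ff_ne {i k : Fin r} (h : k ≠ i) (W : Idx m → Polynomial ℂ) (a b : ℕ) :
    der i W (ff hm k a b) = 0 := by
  rw [ff, der_sub, der_mul, der_mul, ev_Z_ne hm h, ev_Z_ne hm h, ev_Z_ne hm h, ev_Z_ne hm h]
  ring

lemma der_cross {i k : Fin r} (h : k ≠ i) (W : Idx m → Polynomial ℂ) (a b : ℕ) :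
    der i W (Z hm k a * Z hm i b) = Polynomial.X ^ (m i + b) * der i W (Z hm k a) := by
  rw [der_mul, ev_Z_ne hm h, ev_Z]; ring

lemma der_cross_ne {i k l : Fin r} (h : k ≠ i) (h' : l ≠ i) (W : Idx m → Polynomial ℂ)
    (a b : ℕ) : der i W (Z hm k a * Z hm l b) = 0 := by
  rw [der_mul, ev_Z_ne hm h, ev_Z_ne hm h']; ring

/-- Minor as an element of the ideal. -/
noncomputable def fI (i : Fin r) (a b : ℕ) : II hm := ⟨ff hm i a b, ff_mem hm i a b⟩

/-- Cross product as an element of the ideal. -/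
noncomputable def cI {k l : Fin r} (h : k ≠ l) (a b : ℕ) : II hm :=
  ⟨Z hm k a * Z hm l b, cross_mem hm h a b⟩

/-- `ψ` is linear along the branch `i`. -/
def IsHom (i : Fin r) (ψ : II hm → Polynomial ℂ) : Prop :=
  (∀ f g, ψ (f + g) = ψ f + ψ g) ∧ ∀ (g : PP m) f, ψ (g • f) = ev m i g * ψ f

variable {hm}

lemma IsHom.zero {i : Fin r} {ψ : II hm → Polynomial ℂ} (h : IsHom hm i ψ) : ψ 0 = 0 := by
  have := h.2 0 0
  simpa using this

lemma IsHom.sub {i : Fin r} {ψ : II hm → Polynomial ℂ} (h : IsHom hm i ψ) (f g) :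
    ψ (f - g) = ψ f - ψ g := by
  have := h.1 (f - g) g
  rw [sub_add_cancel] at this
  rw [this]; ring

lemma IsHom.der (i : Fin r) (W : Idx m → Polynomial ℂ) :
    IsHom hm i (fun f => der i W f.1) := by
  refine ⟨fun f g => der_add i W f.1 g.1, fun g f => ?_⟩
  show RPC.der i W (g * f.1) = _
  rw [der_mul, II_le_ker hm i f.1 f.2]; ring

lemma gen_induction {p : II hm → Prop} (h1 : ∀ i a b, a < b → b < m i → p (fI hm i a b))
    (h2 : ∀ (k l : Fin r) (h : k ≠ l) (a b : ℕ), a < m k → b < m l → p (cI hm h a b))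
    (h0 : p 0) (hadd : ∀ f g, p f → p g → p (f + g)) (hs : ∀ (g : PP m) f, p f → p (g • f))
    (f : II hm) : p f := by
  obtain ⟨f, hf⟩ := f
  refine Submodule.span_induction (p := fun f hf => p ⟨f, hf⟩) ?_ h0 ?_ ?_ hf
  · rintro q (⟨i, a, b, hab, hb, rfl⟩ | ⟨k, l, a, b, h, ha, hb, rfl⟩)
    · exact h1 i a b hab hb
    · exact h2 k l h a b ha hb
  · intro x y hx hy px py
    exact hadd ⟨x, hx⟩ ⟨y, hy⟩ px py
  · intro a x hx px
    exact hs a ⟨x, hx⟩ px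

lemma X_cancel {k : ℕ} {p q : Polynomial ℂ}
    (h : Polynomial.X ^ k * p = Polynomial.X ^ k * q) : p = q :=
  mul_left_cancel₀ (pow_ne_zero _ Polynomial.X_ne_zero) h

lemma cI_comm {k l : Fin r} (hk : k ≠ l) (a b : ℕ) : cI hm hk a b = cI hm hk.symm b a :=
  Subtype.ext (mul_comm _ _)


lemma IsHom.R1 {i : Fin r} {ψ : II hm → Polynomial ℂ} (h : IsHom hm i ψ)
    (a b c : ℕ) : Polynomial.X ^ c * ψ (fI hm i a b) =
    Polynomial.X ^ a * ψ (fI hm i c b) - Polynomial.X ^ b * ψ (fI hm i c a) := by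
  have e : Z hm i c • fI hm i a b = Z hm i a • fI hm i c b - Z hm i b • fI hm i c a := by
    apply Subtype.ext
    simp only [fI, ff, Submodule.coe_sub, Submodule.coe_smul, smul_eq_mul]
    ring
  have e' := congrArg ψ e
  rw [h.sub, h.2, h.2, h.2, ev_Z, ev_Z, ev_Z] at e'
  apply X_cancel (k := m i)
  linear_combination e'

lemma IsHom.R2 {i : Fin r} {ψ : II hm → Polynomial ℂ} (h : IsHom hm i ψ)
    {k : Fin r} (hk : k ≠ i) (a b : ℕ) : ψ (fI hm k a b) = 0 := by
  have e : Z hm i 0 • fI hm k a b = Z hm k a • cI hm hk (b + 1) 0 - Z hm k b • cI hm hk (a + 1) 0 := by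
    apply Subtype.ext
    simp only [fI, ff, cI, Submodule.coe_sub, Submodule.coe_smul, smul_eq_mul]
    ring
  have e' := congrArg ψ e
  rw [h.sub, h.2, h.2, h.2, ev_Z, ev_Z_ne hm hk, ev_Z_ne hm hk] at e'
  apply X_cancel (k := m i + 0)
  linear_combination e'

lemma IsHom.R3 {i : Fin r} {ψ : II hm → Polynomial ℂ} (h : IsHom hm i ψ)
    {k l : Fin r} (hk : k ≠ i) (hl : l ≠ i) (hkl : k ≠ l) (a b : ℕ) :
    ψ (cI hm hkl a b) = 0 := by
  have e : Z hm i 0 • cI hm hkl a b = Z hm k a • cI hm hl b 0 := by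
    apply Subtype.ext
    simp only [cI, Submodule.coe_smul, smul_eq_mul]
    ring
  have e' := congrArg ψ e
  rw [h.2, h.2, ev_Z, ev_Z_ne hm hk] at e'
  apply X_cancel (k := m i + 0)
  linear_combination e'

lemma IsHom.R4 {i : Fin r} {ψ : II hm → Polynomial ℂ} (h : IsHom hm i ψ)
    {k : Fin r} (hk : k ≠ i) (a b : ℕ) :
    ψ (cI hm hk a b) = Polynomial.X ^ b * ψ (cI hm hk a 0) := by
  have e : Z hm i 0 • cI hm hk a b = Z hm i b • cI hm hk a 0 := by
    apply Subtype.ext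
    simp only [cI, Submodule.coe_smul, smul_eq_mul]
    ring
  have e' := congrArg ψ e
  rw [h.2, h.2, ev_Z, ev_Z] at e'
  apply X_cancel (k := m i + 0)
  linear_combination e'

variable (hm)

/-- Coordinates on the space of homomorphisms. -/
noncomputable def GG (i : Fin r) (x : Idx m) (ψ : II hm → Polynomial ℂ) : Polynomial ℂ :=
  open Classical in
  if h : x.1 = i then
    ∑ b ∈ Finset.range ((x.2 : ℕ) + 1), Polynomial.X ^ ((x.2 : ℕ) - b) * ψ (fI hm x.1 0 b)
  else ψ (cI hm h x.2 0)

variable {hm}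

lemma GG_ne {i k : Fin r} (h : k ≠ i) (a : Fin (m k)) (ψ : II hm → Polynomial ℂ) :
    GG hm i ⟨k, a⟩ ψ = ψ (cI hm h a 0) := by
  simp [GG, h]

lemma GG_self (i : Fin r) (a : Fin (m i)) (ψ : II hm → Polynomial ℂ) :
    GG hm i ⟨i, a⟩ ψ =
      ∑ b ∈ Finset.range ((a : ℕ) + 1), Polynomial.X ^ ((a : ℕ) - b) * ψ (fI hm i 0 b) := by
  simp [GG]

lemma GG_sub (i : Fin r) (x : Idx m) (ψ ψ' : II hm → Polynomial ℂ) :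
    GG hm i x (fun f => ψ f - ψ' f) = GG hm i x ψ - GG hm i x ψ' := by
  obtain ⟨k, a⟩ := x
  by_cases h : k = i
  · subst h
    simp only [GG_self, mul_sub, Finset.sum_sub_distrib]
  · simp only [GG_ne h]

lemma GG_mul (i : Fin r) (x : Idx m) (c : Polynomial ℂ) (ψ : II hm → Polynomial ℂ) :
    GG hm i x (fun f => c * ψ f) = c * GG hm i x ψ := by
  obtain ⟨k, a⟩ := x
  by_cases h : k = i
  · subst h
    simp only [GG_self, Finset.mul_sum]
    exact Finset.sum_congr rfl fun _ _ => by ring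
  · simp only [GG_ne h]

lemma GG_add (i : Fin r) (x : Idx m) (ψ ψ' : II hm → Polynomial ℂ) :
    GG hm i x (fun f => ψ f + ψ' f) = GG hm i x ψ + GG hm i x ψ' := by
  obtain ⟨k, a⟩ := x
  by_cases h : k = i
  · subst h
    simp only [GG_self, mul_add, Finset.sum_add_distrib]
  · simp only [GG_ne h]

lemma uniq_zero {i : Fin r} {ψ : II hm → Polynomial ℂ} (h : IsHom hm i ψ)
    (hG : ∀ x, GG hm i x ψ = 0) (f : II hm) : ψ f = 0 := by
  have key : ∀ b, b < m i → ψ (fI hm i 0 b) = 0 := by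
    intro b
    induction b using Nat.strong_induction_on with
    | _ b ih =>
      intro hb
      have := hG ⟨i, ⟨b, hb⟩⟩
      rw [GG_self, Finset.sum_range_succ, Finset.sum_eq_zero] at this
      · simpa using this
      · intro c hc
        have hc' := Finset.mem_range.1 hc
        simp only at hc'
        rw [ih c hc' (by omega), mul_zero]
  have key2 : ∀ (k : Fin r) (hk : k ≠ i) (a b : ℕ), a < m k → ψ (cI hm hk a b) = 0 := by
    intro k hk a b ha
    have := hG ⟨k, ⟨a, ha⟩⟩
    rw [GG_ne hk] at this
    rw [h.R4 hk, this, mul_zero]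
  refine gen_induction (p := fun f => ψ f = 0) ?_ ?_ h.zero ?_ ?_ f
  · intro k a b hab hb
    by_cases hk : k = i
    · subst hk
      have := h.R1 a b 0
      rw [key b hb, key a (by omega)] at this
      simpa using this
    · exact h.R2 hk a b
  · intro k l hkl a b ha hb
    by_cases hl : l = i
    · subst hl
      exact key2 k hkl a b ha
    · by_cases hk : k = i
      · subst hk
        rw [cI_comm]
        exact key2 l hl b a hb
      · exact h.R3 hk hl hkl a b
  · intro f g hf hg; rw [h.1, hf, hg, add_zero]
  · intro g f hf; rw [h.2, hf, mul_zero]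

lemma IsHom.sub' {i : Fin r} {ψ ψ' : II hm → Polynomial ℂ} (h : IsHom hm i ψ)
    (h' : IsHom hm i ψ') : IsHom hm i (fun f => ψ f - ψ' f) :=
  ⟨fun f g => by beta_reduce; rw [h.1, h'.1]; ring, fun g f => by beta_reduce; rw [h.2, h'.2]; ring⟩

lemma IsHom.mul' {i : Fin r} {ψ : II hm → Polynomial ℂ} (h : IsHom hm i ψ)
    (c : Polynomial ℂ) : IsHom hm i (fun f => c * ψ f) :=
  ⟨fun f g => by beta_reduce; rw [h.1]; ring, fun g f => by beta_reduce; rw [h.2]; ring⟩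

lemma uniq {i : Fin r} {ψ ψ' : II hm → Polynomial ℂ} (h : IsHom hm i ψ) (h' : IsHom hm i ψ')
    (hG : ∀ x, GG hm i x ψ = GG hm i x ψ') (f : II hm) : ψ f = ψ' f := by
  have := uniq_zero (h.sub' h') (fun x => by rw [GG_sub, hG, sub_self]) f
  exact sub_eq_zero.1 this

lemma GG_der_self (i : Fin r) (W : Idx m → Polynomial ℂ) (a : Fin (m i)) :
    GG hm i ⟨i, a⟩ (fun f => der i W f.1) = Polynomial.X ^ m i *
      (der i W (Z hm i (a + 1)) - Polynomial.X ^ ((a : ℕ) + 1) * der i W (Z hm i 0) -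
        (((a : ℕ) : Polynomial ℂ) + 1) * Polynomial.X ^ (a : ℕ) *
        (der i W (Z hm i 1) - Polynomial.X * der i W (Z hm i 0))) := by
  rw [GG_self]
  generalize (a : ℕ) = n
  simp only [fI, der_ff]
  induction n with
  | zero => simp
  | succ n ih =>
    rw [Finset.sum_range_succ]
    have : ∀ b ∈ Finset.range (n + 1), ∀ q : Polynomial ℂ, Polynomial.X ^ (n + 1 - b) * q
      = Polynomial.X * (Polynomial.X ^ (n - b) * q) := by
      intro b hb q
      have := Finset.mem_range.1 hb
      rw [show n + 1 - b = (n - b) + 1 by omega]; ring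
    rw [Finset.sum_congr rfl (fun b hb => this b hb _), ← Finset.mul_sum, ih]
    push_cast
    rw [Nat.sub_self]
    ring

lemma GG_der_ne {i k : Fin r} (h : k ≠ i) (W : Idx m → Polynomial ℂ) (a : Fin (m k)) :
    GG hm i ⟨k, a⟩ (fun f => der i W f.1) = Polynomial.X ^ m i * W ⟨k, a⟩ := by
  rw [GG_ne h]
  simp only [cI]
  rw [der_cross hm h, der_Z_lt hm i W k a a.2, add_zero]

lemma good_gen {ψ : Fin r → II hm → Polynomial ℂ}
    (hB : ∀ f, ∃ (c : ℂ) (h : Fin r → Polynomial ℂ), ∀ i,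
      ψ i f = Polynomial.C c + Polynomial.X ^ m i * h i)
    (f : II hm) (i : Fin r) (h0 : (ψ i f).coeff 0 = 0) (k : Fin r) :
    Polynomial.X ^ m k ∣ ψ k f := by
  obtain ⟨c, h, e⟩ := hB f
  have hc : c = 0 := by
    have h1 : m i ≠ 0 := by have := hm i; omega
    rw [e, Polynomial.coeff_add, Polynomial.coeff_X_pow_mul'] at h0
    have := hm i
    simpa [h1] using h0
  rw [e, hc]; simp

lemma coeff_mid {ψ : Fin r → II hm → Polynomial ℂ}
    (hB : ∀ f, ∃ (c : ℂ) (h : Fin r → Polynomial ℂ), ∀ i,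
      ψ i f = Polynomial.C c + Polynomial.X ^ m i * h i)
    (f : II hm) (i : Fin r) (d : ℕ) (h1 : 0 < d) (h2 : d < m i) : (ψ i f).coeff d = 0 := by
  obtain ⟨c, h, e⟩ := hB f
  rw [e, Polynomial.coeff_add, Polynomial.coeff_X_pow_mul', if_neg (by omega),
    Polynomial.coeff_C, if_neg (by omega), add_zero]

lemma cross_const {ψ : Fin r → II hm → Polynomial ℂ} (hψ : ∀ i, IsHom hm i (ψ i))
    (hB : ∀ f, ∃ (c : ℂ) (h : Fin r → Polynomial ℂ), ∀ i,
      ψ i f = Polynomial.C c + Polynomial.X ^ m i * h i)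
    {k l : Fin r} (h : k ≠ l) (a b : ℕ) (hl : 2 ≤ m l) :
    (ψ l (cI hm h a b)).coeff 0 = 0 := by
  have e1 : (ψ l (cI hm h a 0)).coeff 0 = 0 := by
    have := coeff_mid hB (cI hm h a 1) l 1 one_pos (by omega)
    rw [(hψ l).R4 h, pow_one, Polynomial.coeff_X_mul] at this
    exact this
  rw [(hψ l).R4 h, Polynomial.mul_coeff_zero, e1, mul_zero]

lemma good {ψ : Fin r → II hm → Polynomial ℂ} (hψ : ∀ i, IsHom hm i (ψ i))
    (hB : ∀ f, ∃ (c : ℂ) (h : Fin r → Polynomial ℂ), ∀ i,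
      ψ i f = Polynomial.C c + Polynomial.X ^ m i * h i)
    (h3 : 3 ≤ ∑ i, m i) (f : II hm) : ∀ i, Polynomial.X ^ m i ∣ ψ i f := by
  refine gen_induction (p := fun f => ∀ i, Polynomial.X ^ m i ∣ ψ i f) ?_ ?_ ?_ ?_ ?_ f
  · intro k a b hab hb
    by_cases hl : ∃ l, l ≠ k
    · obtain ⟨l, hl⟩ := hl
      refine good_gen hB _ l ?_
      rw [(hψ l).R2 hl.symm]; simp
    · push Not at hl
      have hk : ∑ i, m i = m k := by
        rw [Finset.sum_eq_single k]
        · intro l _ h; exact absurd (hl l) h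
        · simp
      rw [hk] at h3
      obtain ⟨c, hc, hca, hcb⟩ : ∃ c, c < m k ∧ c ≠ a ∧ c ≠ b := by
        by_cases h1 : 0 ≠ a
        · by_cases h2 : 0 ≠ b
          · exact ⟨0, by omega, h1, h2⟩
          · omega
        · by_cases h2 : 1 ≠ b
          · exact ⟨1, by omega, by omega, h2⟩
          · exact ⟨2, by omega, by omega, by omega⟩
      refine good_gen hB _ k ?_
      have e := congrArg (fun p => Polynomial.coeff p c) ((hψ k).R1 a b c)
      simp only [Polynomial.coeff_sub, Polynomial.coeff_X_pow_mul', le_refl, if_true,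
        Nat.sub_self] at e
      rw [e]
      have z : ∀ d g, d ≠ c → (if d ≤ c then (ψ k g).coeff (c - d) else 0) = 0 := by
        intro d g hd
        split_ifs with h
        · exact coeff_mid hB g k _ (by omega) (by omega)
        · rfl
      rw [z a _ hca.symm, z b _ hcb.symm, sub_zero]
  · intro k l hkl a b ha hb
    by_cases hi : ∃ i, i ≠ k ∧ i ≠ l
    · obtain ⟨i, hk, hl⟩ := hi
      refine good_gen hB _ i ?_
      rw [(hψ i).R3 hk.symm hl.symm]; simp
    · push Not at hi
      have hs : ∑ i, m i = m k + m l := by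
        rw [← Finset.sum_pair hkl]
        symm
        apply Finset.sum_subset (Finset.subset_univ _)
        intro x _ hx
        simp only [Finset.mem_insert, Finset.mem_singleton, not_or] at hx
        exact absurd (hi x hx.1) hx.2
      rw [hs] at h3
      by_cases hl : 2 ≤ m l
      · exact good_gen hB _ l (cross_const hψ hB hkl a b hl)
      · rw [cI_comm]
        exact good_gen hB _ k (cross_const hψ hB hkl.symm b a (by omega))
  · intro i; rw [(hψ i).zero]; exact dvd_zero _
  · intro f g hf hg i; rw [(hψ i).1]; exact dvd_add (hf i) (hg i)
  · intro g f hf i; rw [(hψ i).2]; exact Dvd.dvd.mul_left (hf i) _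

/-- extension of `β` on branch `i` to natural indices -/
noncomputable def bb (i : Fin r) (β : Idx m → Polynomial ℂ) (a : ℕ) : Polynomial ℂ :=
  if h : a < m i then β ⟨i, ⟨a, h⟩⟩ else 0

/-- own-branch coefficients -/
noncomputable def Vb (i : Fin r) (β : Idx m → Polynomial ℂ) (a : ℕ) : Polynomial ℂ :=
  - (Polynomial.C ((a : ℂ) / (m i : ℂ)) * Polynomial.X ^ a * bb i β (m i - 1)) +
    Polynomial.X ^ m i * (if a = 0 then 0 else bb i β (a - 1))

/-- coefficients of the vector field with coordinates `β` -/
noncomputable def WW (i : Fin r) (β : Idx m → Polynomial ℂ) (x : Idx m) : Polynomial ℂ :=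
  open Classical in
  if x.1 = i then Vb i β x.2 else Polynomial.X ^ m i * β x

lemma Vb_zero (i : Fin r) (β : Idx m → Polynomial ℂ) : Vb i β 0 = 0 := by
  simp [Vb]

lemma Vb_self (hm : ∀ i, 1 ≤ m i) (i : Fin r) (β : Idx m → Polynomial ℂ) :
    Vb i β (m i) = 0 := by
  have h := hm i
  have h' : (m i : ℂ) ≠ 0 := by
    have : m i ≠ 0 := by omega
    exact_mod_cast this
  rw [Vb, div_self h', if_neg (by omega)]
  simp

lemma Vb_succ (i : Fin r) (β : Idx m → Polynomial ℂ) (a : ℕ) :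
    Vb i β (a + 1) = - (((a : Polynomial ℂ) + 1) * Polynomial.C (1 / (m i : ℂ)) *
      Polynomial.X ^ (a + 1) * bb i β (m i - 1)) + Polynomial.X ^ m i * bb i β a := by
  have : Polynomial.C (((a + 1 : ℕ) : ℂ) / (m i : ℂ)) =
      ((a : Polynomial ℂ) + 1) * Polynomial.C (1 / (m i : ℂ)) := by
    rw [div_eq_mul_one_div, Polynomial.C_mul]
    congr 1
    simp
  rw [Vb, this, if_neg (Nat.succ_ne_zero a), Nat.add_sub_cancel]

lemma der_WW (i : Fin r) (β : Idx m → Polynomial ℂ) (a : ℕ) (ha : a ≤ m i) :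
    der i (WW i β) (Z hm i a) = Vb i β a := by
  rcases ha.lt_or_eq with h | h
  · rw [der_Z_lt hm i _ i a h, WW, if_pos rfl]
  · subst h
    rw [der_Z_self, WW, if_pos rfl]
    simp only
    rw [Vb_zero, Vb_self hm, mul_zero]

lemma Vb_diff (i : Fin r) (β : Idx m → Polynomial ℂ) (b : ℕ) :
    ∃ q, Vb i β (b + 1) - Polynomial.X * Vb i β b =
      - (Polynomial.C (1 / (m i : ℂ)) * Polynomial.X ^ (b + 1) * bb i β (m i - 1)) +
      Polynomial.X ^ m i * q := by
  rcases b with _ | b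
  · refine ⟨bb i β 0, ?_⟩
    rw [Vb_succ, Vb_zero]; push_cast; ring
  · refine ⟨bb i β (b + 1) - Polynomial.X * bb i β b, ?_⟩
    rw [Vb_succ, Vb_succ]; push_cast; ring

lemma WW_dvd (i : Fin r) (β : Idx m → Polynomial ℂ) (f : II hm) :
    Polynomial.X ^ (2 * m i) ∣ der i (WW i β) f.1 := by
  have hD := IsHom.der (hm := hm) i (WW i β)
  have hcr : ∀ (k : Fin r) (hk : k ≠ i) (a b : ℕ), a < m k →
      Polynomial.X ^ (2 * m i) ∣ der i (WW i β) (cI hm hk a b).1 := by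
    intro k hk a b ha
    simp only [cI]
    rw [der_cross hm hk, der_Z_lt hm i _ k a ha, WW, if_neg hk]
    exact ⟨Polynomial.X ^ b * β ⟨k, ⟨a, ha⟩⟩, by ring⟩
  refine gen_induction (p := fun f => Polynomial.X ^ (2 * m i) ∣ der i (WW i β) f.1)
    ?_ ?_ ?_ ?_ ?_ f
  · intro k a b hab hb
    by_cases hk : k = i
    · subst hk
      simp only [fI, der_ff]
      rw [der_WW k β a (by omega), der_WW k β (a + 1) (by omega), der_WW k β b (by omega),
        der_WW k β (b + 1) (by omega)]
      obtain ⟨q, hq⟩ := Vb_diff k β a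
      obtain ⟨q', hq'⟩ := Vb_diff k β b
      rw [hq, hq']
      exact ⟨Polynomial.X ^ a * q' - Polynomial.X ^ b * q, by ring⟩
    · simp only [fI, der_ff_ne hm hk]; exact dvd_zero _
  · intro k l hkl a b ha hb
    by_cases hl : l = i
    · subst hl
      exact hcr k hkl a b ha
    · by_cases hk : k = i
      · subst hk
        rw [cI_comm]
        exact hcr l hl b a hb
      · simp only [cI, der_cross_ne hm hk hl]; exact dvd_zero _
  · have : der i (WW i β) (0 : II hm).1 = 0 := hD.zero
    rw [this]; exact dvd_zero _
  · intro f g hf hg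
    have := hD.1 f g
    simp only at this
    rw [this]; exact dvd_add hf hg
  · intro g f hf
    have := hD.2 g f
    simp only at this
    rw [this]; exact Dvd.dvd.mul_left hf _

lemma GG_WW (i : Fin r) (β : Idx m → Polynomial ℂ) (hβ : β ⟨i, ⟨0, hm i⟩⟩ = 0) (x : Idx m) :
    GG hm i x (fun f => der i (WW i β) f.1) = Polynomial.X ^ (2 * m i) * β x := by
  obtain ⟨k, a⟩ := x
  by_cases hk : k = i
  · subst hk
    have h0 : bb k β 0 = 0 := by
      rw [bb, dif_pos (show 0 < m k from hm k), hβ]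
    have ha : bb k β a = β ⟨k, a⟩ := by
      rw [bb, dif_pos a.2]
    have := a.2
    rw [GG_der_self, der_WW _ _ _ (by omega), der_WW _ _ _ (by omega),
      der_WW _ _ _ (by omega), Vb_succ, Vb_zero, ← zero_add 1, Vb_succ, h0, ha]
    push_cast; ring
  · rw [GG_der_ne hk, WW, if_neg hk]; ring

/-- Number of coefficients read off from the coordinate `x` on branch `i`. -/
def NN (i : Fin r) (x : Idx m) : ℕ :=
  if x.1 = i then
    (if (x.2 : ℕ) = 0 then 0 else if (x.2 : ℕ) + 1 = m x.1 then 2 * m x.1 - 1 else m x.1)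
  else m i

lemma NN_ne {i k : Fin r} (h : k ≠ i) (a : Fin (m k)) : NN i ⟨k, a⟩ = m i := by
  simp [NN, h]

lemma NN_self (i : Fin r) (a : Fin (m i)) : NN i ⟨i, a⟩ =
    if (a : ℕ) = 0 then 0 else if (a : ℕ) + 1 = m i then 2 * m i - 1 else m i := by
  simp [NN]

lemma sum_NN_self (k : ℕ) (hk : 1 ≤ k) : (∑ a : Fin k,
    if (a : ℕ) = 0 then 0 else if (a : ℕ) + 1 = k then 2 * k - 1 else k) + 1 = k * k := by
  obtain _ | _ | k := k
  · omega
  · simp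
  · rw [Fin.sum_univ_succ, Fin.sum_univ_castSucc]
    have h1 : ∀ a : Fin k, (if ((Fin.castSucc a).succ : ℕ) = 0 then 0
      else if ((Fin.castSucc a).succ : ℕ) + 1 = k + 1 + 1 then 2 * (k + 1 + 1) - 1
        else k + 1 + 1) = k + 2 := by
      intro a
      have := a.2
      simp only [Fin.val_succ, Fin.val_castSucc]
      rw [if_neg (by omega), if_neg (by omega)]
    rw [Finset.sum_congr rfl (fun a _ => h1 a)]
    simp
    have : 2 * (k + 1 + 1) - 1 = 2 * k + 3 := by omega
    rw [this]; ring

lemma sum_NN (hm : ∀ i, 1 ≤ m i) (i : Fin r) :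
    (∑ x : Idx m, NN i x) + 1 = m i * ∑ k, m k := by
  rw [Fintype.sum_sigma, ← Finset.add_sum_erase _ _ (Finset.mem_univ i)]
  simp only [NN_self]
  have h1 : ∀ k ∈ Finset.univ.erase i, (∑ a : Fin (m k), NN i ⟨k, a⟩) = m i * m k := by
    intro k hk
    rw [Finset.sum_congr rfl (fun a _ => NN_ne (Finset.ne_of_mem_erase hk) a)]
    simp [mul_comm]
  rw [Finset.sum_congr rfl h1, add_right_comm, sum_NN_self _ (hm i), ← Finset.mul_sum, ← mul_add,
    Finset.add_sum_erase _ _ (Finset.mem_univ i)]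

/-- Index set of the coefficient functionals. -/
abbrev JJ (m : Fin r → ℕ) := (p : Fin r × Idx m) × Fin (NN p.1 p.2)

lemma card_JJ (hm : ∀ i, 1 ≤ m i) : Fintype.card (JJ m) + r = (∑ k, m k) * ∑ k, m k := by
  rw [Fintype.card_sigma]
  simp only [Fintype.card_fin]
  rw [Fintype.sum_prod_type]
  have : ∑ i : Fin r, ((∑ x : Idx m, NN i x) + 1) = (∑ k, m k) * ∑ k, m k := by
    rw [Finset.sum_congr rfl (fun i _ => sum_NN hm i), Finset.sum_mul]
  rw [← this, Finset.sum_add_distrib]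
  simp

lemma der_add_W (i : Fin r) (W W' : Idx m → Polynomial ℂ) (f : PP m) :
    der i (fun x => W x + W' x) f = der i W f + der i W' f := by
  simp only [der, add_mul, Finset.sum_add_distrib]

lemma der_mul_W (i : Fin r) (c : Polynomial ℂ) (W : Idx m → Polynomial ℂ) (f : PP m) :
    der i (fun x => c * W x) f = c * der i W f := by
  simp only [der, mul_assoc, Finset.mul_sum]

lemma dvd_GG (i : Fin r) (h : Idx m → Polynomial ℂ) (x : Idx m) :
    Polynomial.X ^ (m i + NN i x) ∣
      GG hm i x (fun f => der i (fun x => Polynomial.X ^ m i * h x) f.1) := by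
  obtain ⟨k, a⟩ := x
  by_cases hk : k = i
  · subst hk
    have ha := a.2
    have h0 := hm k
    rw [GG_der_self, NN_self]
    split_ifs with h1 h2
    · exact ⟨_, by rw [add_zero]⟩
    · have e : 2 * m k - 1 = m k + (a : ℕ) := by omega
      rw [h2, der_Z_self, der_Z_lt hm k _ k 0 (by omega), der_Z_lt hm k _ k 1 (by omega), e]
      have e2 : (Polynomial.X : Polynomial ℂ) ^ m k = Polynomial.X ^ (a : ℕ) * Polynomial.X := by
        rw [← pow_succ, h2]
      rw [pow_add, pow_add]
      refine ⟨2 * Polynomial.X * h ⟨k, ⟨0, hm k⟩⟩ - Polynomial.X * h ⟨k, ⟨0, hm k⟩⟩ -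
        ((a : ℕ) + 1 : Polynomial ℂ) *
        (h ⟨k, ⟨1, by omega⟩⟩ - Polynomial.X * h ⟨k, ⟨0, hm k⟩⟩), ?_⟩
      rw [e2]
      ring
    · rw [der_Z_lt hm k _ k 0 (by omega), der_Z_lt hm k _ k 1 (by omega),
        der_Z_lt hm k _ k (a + 1) (by omega), pow_add]
      refine ⟨h ⟨k, ⟨a + 1, by omega⟩⟩ - Polynomial.X ^ ((a : ℕ) + 1) * h ⟨k, ⟨0, hm k⟩⟩ -
        ((a : ℕ) + 1 : Polynomial ℂ) * Polynomial.X ^ (a : ℕ) *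
        (h ⟨k, ⟨1, by omega⟩⟩ - Polynomial.X * h ⟨k, ⟨0, hm k⟩⟩), ?_⟩
      ring
  · rw [GG_der_ne hk, NN_ne hk]
    exact ⟨h ⟨k, a⟩, by ring⟩

lemma inj_const (h3 : 3 ≤ ∑ i, m i) (c : Idx m → ℂ)
    (hc : ∀ i x j, j < NN i x →
      (GG hm i x (fun f => der i (fun x => Polynomial.C (c x)) f.1)).coeff (m i + j) = 0) :
    c = 0 := by
  funext x
  obtain ⟨k, a⟩ := x
  by_cases hl : ∃ i, i ≠ k
  · obtain ⟨i, hi⟩ := hl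
    have := hc i ⟨k, a⟩ 0 (by rw [NN_ne hi.symm]; exact hm i)
    rw [GG_der_ne hi.symm, add_zero, Polynomial.coeff_X_pow_mul'] at this
    simpa using this
  · push Not at hl
    have hk : ∑ i, m i = m k := by
      rw [Finset.sum_eq_single k]
      · intro l _ h; exact absurd (hl l) h
      · simp
    rw [hk] at h3
    have key : ∀ b (h1 : 1 ≤ b) (h2 : b + 1 < m k) (j : ℕ) (hj : j < m k), Polynomial.coeff
      (Polynomial.C (c ⟨k, ⟨b + 1, h2⟩⟩) - Polynomial.X ^ (b + 1) *
        Polynomial.C (c ⟨k, ⟨0, hm k⟩⟩) - (b + 1 : Polynomial ℂ) * Polynomial.X ^ b *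
        (Polynomial.C (c ⟨k, ⟨1, by omega⟩⟩) - Polynomial.X * Polynomial.C (c ⟨k, ⟨0, hm k⟩⟩)))
        j = 0 := by
      intro b h1 h2 j hj
      have := hc k ⟨k, ⟨b, by omega⟩⟩ j (by
        rw [NN_self]; simp only; rw [if_neg (by omega), if_neg (by omega)]; exact hj)
      rw [GG_der_self, Polynomial.coeff_X_pow_mul', if_pos (by omega), Nat.add_sub_cancel_left,
        der_Z_lt hm k _ k 0 (by omega), der_Z_lt hm k _ k 1 (by omega)] at this
      simp only at this
      rw [der_Z_lt hm k _ k (b + 1) h2] at this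
      exact this
    have e1 : ∀ b (h1 : 1 ≤ b) (h2 : b + 1 < m k), c ⟨k, ⟨b + 1, h2⟩⟩ = 0 := by
      intro b h1 h2
      have := key b h1 h2 0 (by omega)
      have hb : b ≠ 0 := by omega
      simpa [Polynomial.mul_coeff_zero, hb, hb.symm] using this
    have p : ∀ x y z : ℂ, (Polynomial.C x - Polynomial.X ^ (1 + 1) * Polynomial.C y -
        (((1 : ℕ) : Polynomial ℂ) + 1) * Polynomial.X ^ 1 *
        (Polynomial.C z - Polynomial.X * Polynomial.C y)) =
        Polynomial.C x + Polynomial.C (-2 * z) * Polynomial.X +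
          Polynomial.C y * Polynomial.X ^ 2 := by
      intro x y z
      simp only [Polynomial.C_mul, Polynomial.C_neg]
      have : (Polynomial.C 2 : Polynomial ℂ) = 2 := rfl
      rw [this]; push_cast; ring
    have e2 : c ⟨k, ⟨1, by omega⟩⟩ = 0 := by
      have := key 1 le_rfl (by omega) 1 (by omega)
      rw [p] at this
      simpa [Polynomial.coeff_C, Polynomial.coeff_X_pow] using this
    have e3 : c ⟨k, ⟨0, hm k⟩⟩ = 0 := by
      have := key 1 le_rfl (by omega) 2 (by omega)
      rw [p] at this
      simpa [Polynomial.coeff_C, Polynomial.coeff_X] using this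
    obtain ⟨a, ha⟩ := a
    obtain _ | _ | a := a
    · exact e3
    · exact e2
    · exact e1 (a + 1) (by omega) ha

variable (hm)

/-- Branch evaluation on the quotient ring. -/
noncomputable def evB (i : Fin r) : (PP m ⧸ II hm) →ₐ[ℂ] Polynomial ℂ :=
  Ideal.Quotient.liftₐ (II hm) (ev m i) (II_le_ker hm i)

variable {hm}

lemma evB_mk (i : Fin r) (p : PP m) : evB hm i (Ideal.Quotient.mk (II hm) p) = ev m i p := rfl

lemma evB_inj (hr : 1 ≤ r) (b b' : PP m ⧸ II hm) (h : ∀ i, evB hm i b = evB hm i b') : b = b' := by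
  obtain ⟨p, rfl⟩ := Ideal.Quotient.mk_surjective b
  obtain ⟨q, rfl⟩ := Ideal.Quotient.mk_surjective b'
  rw [Ideal.Quotient.eq, mem_II_iff hm hr]
  intro i
  have := h i
  rw [evB_mk, evB_mk] at this
  rw [map_sub, this, sub_self]

lemma evB_form (b : PP m ⧸ II hm) : ∃ (c : ℂ) (h : Fin r → Polynomial ℂ), ∀ i,
    evB hm i b = Polynomial.C c + Polynomial.X ^ m i * h i := by
  obtain ⟨p, rfl⟩ := Ideal.Quotient.mk_surjective b
  obtain ⟨c, h, h1, -⟩ := normal_form hm p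
  exact ⟨c, h, h1⟩

lemma evB_exists (g : Fin r → Polynomial ℂ) :
    ∃ b : PP m ⧸ II hm, ∀ i, evB hm i b = Polynomial.X ^ m i * g i := by
  obtain ⟨p, hp⟩ := exists_ev hm g
  exact ⟨Ideal.Quotient.mk _ p, hp⟩

/-- Branch components of a homomorphism. -/
noncomputable def psi (φ : Module.Dual (PP m ⧸ II hm) (II hm).Cotangent) (i : Fin r)
    (f : II hm) : Polynomial ℂ := evB hm i (φ ((II hm).toCotangent f))

lemma psi_isHom (φ : Module.Dual (PP m ⧸ II hm) (II hm).Cotangent) (i : Fin r) :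
    IsHom hm i (psi φ i) := by
  refine ⟨fun f g => by simp only [psi, map_add], fun g f => ?_⟩
  have : φ ((II hm).toCotangent (g • f)) =
      Ideal.Quotient.mk (II hm) g * φ ((II hm).toCotangent f) := by
    have e : (II hm).toCotangent (g • f) =
        Ideal.Quotient.mk (II hm) g • (II hm).toCotangent f := by
      rw [map_smul]; rfl
    rw [e, map_smul, smul_eq_mul]
  simp only [psi]
  rw [this, map_mul, evB_mk]

lemma psi_ext (hr : 1 ≤ r) (φ φ' : Module.Dual (PP m ⧸ II hm) (II hm).Cotangent)
    (h : ∀ i f, psi φ i f = psi φ' i f) : φ = φ' := by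
  apply LinearMap.ext
  intro x
  obtain ⟨f, rfl⟩ := (II hm).toCotangent_surjective x
  exact evB_inj hr _ _ fun i => h i f

lemma exists_hom (hr : 1 ≤ r) (ψ : Fin r → II hm → Polynomial ℂ) (hψ : ∀ i, IsHom hm i (ψ i))
    (hd : ∀ f i, Polynomial.X ^ m i ∣ ψ i f) :
    ∃ φ : Module.Dual (PP m ⧸ II hm) (II hm).Cotangent, ∀ i f, psi φ i f = ψ i f := by
  have : ∀ f, ∃ b : PP m ⧸ II hm, ∀ i, evB hm i b = ψ i f := by
    intro f
    choose g hg using hd f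
    obtain ⟨b, hb⟩ := evB_exists (hm := hm) g
    exact ⟨b, fun i => by rw [hb, hg]⟩
  choose F hF using this
  let L : II hm →ₗ[PP m] (PP m ⧸ II hm) :=
    { toFun := F
      map_add' := fun f g => evB_inj hr _ _ fun i => by rw [map_add, hF, hF, hF, (hψ i).1]
      map_smul' := fun g f => evB_inj hr _ _ fun i => by
        have e : (RingHom.id (PP m)) g • F f = Ideal.Quotient.mk (II hm) g * F f := rfl
        rw [e, map_mul, hF, hF, (hψ i).2, evB_mk] }
  have hL : ∀ x y : II hm, L (x * y) = 0 := by
    intro x y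
    have e : x * y = (x : PP m) • y := rfl
    rw [e, map_smul]
    have e2 : (x : PP m) • L y = Ideal.Quotient.mk (II hm) (x : PP m) * L y := rfl
    rw [e2, Ideal.Quotient.eq_zero_iff_mem.2 x.2, zero_mul]
  refine ⟨(Ideal.Cotangent.lift L hL).extendScalarsOfSurjective
    Ideal.Quotient.mk_surjective, fun i f => ?_⟩
  have e : (Ideal.Cotangent.lift L hL).extendScalarsOfSurjective
    (S := PP m ⧸ II hm) Ideal.Quotient.mk_surjective ((II hm).toCotangent f) = F f :=
    Ideal.Cotangent.lift_toCotangent L hL f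
  rw [psi, e, hF]

variable (hm)

/-- The coefficient functionals. -/
noncomputable def Phi :
    Module.Dual (PP m ⧸ II hm) (II hm).Cotangent →ₗ[ℂ] (JJ m → ℂ) where
  toFun φ j := (GG hm j.1.1 j.1.2 (psi φ j.1.1)).coeff (m j.1.1 + (j.2 : ℕ))
  map_add' φ φ' := by
    funext j
    have : psi (φ + φ') j.1.1 = fun f => psi φ j.1.1 f + psi φ' j.1.1 f := by
      funext f; simp only [psi, LinearMap.add_apply, map_add]
    rw [this, GG_add, Polynomial.coeff_add]; rfl
  map_smul' c φ := by
    funext j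
    have : psi (c • φ) j.1.1 = fun f => Polynomial.C c * psi φ j.1.1 f := by
      funext f
      simp only [psi, LinearMap.smul_apply, map_smul, Polynomial.smul_eq_C_mul]
    rw [this, GG_mul, Polynomial.coeff_C_mul]; rfl

variable {hm}

lemma GG_zero_idx (i : Fin r) {ψ : II hm → Polynomial ℂ} (h : IsHom hm i ψ) :
    GG hm i ⟨i, ⟨0, hm i⟩⟩ ψ = 0 := by
  have e : fI hm i 0 0 = 0 := Subtype.ext (by simp [fI, ff])
  rw [GG_self]
  simp [e, h.zero]

lemma Phi_surj (hr : 1 ≤ r) : Function.Surjective (Phi hm) := by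
  intro y
  let β : Fin r → Idx m → Polynomial ℂ := fun i x =>
    ∑ j : Fin (NN i x), Polynomial.monomial (j : ℕ) (y ⟨(i, x), j⟩)
  have hβ : ∀ i, β i ⟨i, ⟨0, hm i⟩⟩ = 0 := by
    intro i
    have : NN i ⟨i, ⟨0, hm i⟩⟩ = 0 := by rw [NN_self]; simp
    apply Finset.sum_eq_zero
    intro j _
    exact absurd j.2 (by omega)
  have hβc : ∀ i x (j : Fin (NN i x)), (β i x).coeff j = y ⟨(i, x), j⟩ := by
    intro i x j
    simp only [β, Polynomial.finsetSum_coeff, Polynomial.coeff_monomial]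
    rw [Finset.sum_eq_single j]
    · simp
    · intro b _ hb
      rw [if_neg]
      exact fun h => hb (Fin.ext h)
    · simp
  choose Q hQ using fun i f => WW_dvd (hm := hm) i (β i) f
  have hQ' : ∀ i f, Polynomial.X ^ m i * (Polynomial.X ^ m i * Q i f) = der i (WW i (β i)) f.1 := by
    intro i f
    rw [hQ]; ring
  have hom : ∀ i, IsHom hm i (fun f => Polynomial.X ^ m i * Q i f) := by
    intro i
    have hD := IsHom.der (hm := hm) i (WW i (β i))
    refine ⟨fun f g => X_cancel (k := m i) ?_, fun g f => X_cancel (k := m i) ?_⟩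
    · have := hD.1 f g
      simp only [← hQ'] at this
      beta_reduce
      linear_combination this
    · have := hD.2 g f
      simp only [← hQ'] at this
      beta_reduce
      linear_combination this
  obtain ⟨φ, hφ⟩ := exists_hom hr (fun i f => Polynomial.X ^ m i * Q i f) hom
    (fun f i => Dvd.intro _ rfl)
  refine ⟨φ, ?_⟩
  funext j
  obtain ⟨⟨i, x⟩, j⟩ := j
  show (GG hm i x (psi φ i)).coeff (m i + (j : ℕ)) = _
  have e : GG hm i x (psi φ i) = Polynomial.X ^ m i * β i x := by
    apply X_cancel (k := m i)
    rw [← GG_mul]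
    have : (fun f => Polynomial.X ^ m i * psi φ i f) = fun f : II hm => der i (WW i (β i)) f.1 := by
      funext f; rw [hφ, hQ']
    rw [this, GG_WW i (β i) (hβ i)]; ring
  rw [e, Polynomial.coeff_X_pow_mul', if_pos (by omega), Nat.add_sub_cancel_left, hβc]

lemma WW_dvd' (i : Fin r) (β : Idx m → Polynomial ℂ) (hβ : β ⟨i, ⟨0, hm i⟩⟩ = 0)
    (hN : ∀ x, Polynomial.X ^ NN i x ∣ β x) (x : Idx m) :
    Polynomial.X ^ (2 * m i) ∣ WW i β x := by
  obtain ⟨k, a⟩ := x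
  by_cases hk : k = i
  · subst hk
    rw [WW, if_pos rfl]
    obtain ⟨a, ha⟩ := a
    simp only
    obtain _ | a := a
    · rw [Vb_zero]; exact dvd_zero _
    · rw [Vb_succ]
      have d1 : Polynomial.X ^ (2 * m k - 1) ∣ bb k β (m k - 1) := by
        have := hN ⟨k, ⟨m k - 1, by omega⟩⟩
        rw [NN_self] at this
        simp only at this
        rw [if_neg (by omega), if_pos (by omega)] at this
        rw [bb, dif_pos (by omega)]
        exact this
      have d2 : Polynomial.X ^ m k ∣ bb k β a := by
        rw [bb, dif_pos (by omega)]
        by_cases h0 : a = 0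
        · subst h0; rw [hβ]; exact dvd_zero _
        · have := hN ⟨k, ⟨a, by omega⟩⟩
          rw [NN_self] at this
          simp only at this
          rw [if_neg h0, if_neg (by omega)] at this
          exact this
      refine dvd_add ?_ ?_
      · rw [dvd_neg]
        obtain ⟨q, hq⟩ := d1
        rw [hq]
        have e : (Polynomial.X : Polynomial ℂ) ^ (2 * m k) =
          Polynomial.X * Polynomial.X ^ (2 * m k - 1) := by
          rw [← pow_succ']; congr 1; omega
        rw [e]
        exact ⟨((a : Polynomial ℂ) + 1) * Polynomial.C (1 / (m k : ℂ)) * Polynomial.X ^ a * q, by ring⟩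
      · rw [two_mul, pow_add]; exact mul_dvd_mul_left _ d2
  · rw [WW, if_neg hk, two_mul, pow_add]
    apply mul_dvd_mul_left
    have := hN ⟨k, a⟩
    rwa [NN_ne hk] at this

/-- kernel of `Phi` consists of trivial homomorphisms -/
lemma ker_Phi (h3 : 3 ≤ ∑ i, m i)
    (φ : Module.Dual (PP m ⧸ II hm) (II hm).Cotangent) (hφ : Phi hm φ = 0) :
    ∃ v : Idx m → PP m ⧸ II hm, ∀ i f, psi φ i f = der i (fun x => evB hm i (v x)) f.1 := by
  have hg := good (psi_isHom φ) (fun f => evB_form _) h3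
  have hGd : ∀ i x, Polynomial.X ^ m i ∣ GG hm i x (psi φ i) := by
    intro i x
    obtain ⟨k, a⟩ := x
    by_cases hk : k = i
    · subst hk
      rw [GG_self]
      exact Finset.dvd_sum fun b _ => Dvd.dvd.mul_left (hg _ _) _
    · rw [GG_ne hk]; exact hg _ _
  choose β hβ using hGd
  have hβ0 : ∀ i, β i ⟨i, ⟨0, hm i⟩⟩ = 0 := by
    intro i
    have := hβ i ⟨i, ⟨0, hm i⟩⟩
    rw [GG_zero_idx i (psi_isHom φ i)] at this
    apply X_cancel (k := m i)
    rw [← this, mul_zero]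
  have hN : ∀ i x, Polynomial.X ^ NN i x ∣ β i x := by
    intro i x
    rw [Polynomial.X_pow_dvd_iff]
    intro d hd
    have := congrFun hφ ⟨(i, x), ⟨d, hd⟩⟩
    have e : (GG hm i x (psi φ i)).coeff (m i + d) = 0 := this
    rwa [hβ, Polynomial.coeff_X_pow_mul', if_pos (by omega), Nat.add_sub_cancel_left] at e
  choose g hg' using fun i x => WW_dvd' (hm := hm) i (β i) (hβ0 i) (hN i) x
  choose v hv using fun x => evB_exists (hm := hm) (fun i => g i x)
  refine ⟨v, fun i f => ?_⟩
  refine uniq (psi_isHom φ i) (IsHom.der i _) (fun x => ?_) f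
  apply X_cancel (k := m i)
  rw [← GG_mul (hm := hm) i x _ (fun f : II hm => der i (fun x => evB hm i (v x)) f.1)]
  have : (fun f : II hm => Polynomial.X ^ m i * der i (fun x => evB hm i (v x)) f.1) =
      fun f : II hm => der i (WW i (β i)) f.1 := by
    funext f
    rw [← der_mul_W]
    congr 1
    funext x
    rw [hv, hg']; ring
  rw [this, GG_WW i (β i) (hβ0 i), hβ]; ring

section final

variable (dbar : (II hm).Cotangent →ₗ[PP m ⧸ II hm]
      (PP m ⧸ II hm) ⊗[PP m] (KaehlerDifferential ℂ (PP m)))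
    (hdbar : ∀ x : II hm, dbar ((II hm).toCotangent x)
      = 1 ⊗ₜ[PP m] (KaehlerDifferential.D ℂ (PP m) x.1))

lemma tmul_D (f : PP m) : (1 : PP m ⧸ II hm) ⊗ₜ[PP m] (KaehlerDifferential.D ℂ (PP m) f) =
    ∑ x, Ideal.Quotient.mk (II hm) (pderiv x f) •
      ((1 : PP m ⧸ II hm) ⊗ₜ[PP m] (KaehlerDifferential.D ℂ (PP m) (X x))) := by
  have h := (KaehlerDifferential.mvPolynomialBasis ℂ (Idx m)).sum_repr
    (KaehlerDifferential.D ℂ (PP m) f)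
  simp only [KaehlerDifferential.mvPolynomialBasis_repr_apply,
    KaehlerDifferential.mvPolynomialBasis_apply] at h
  conv_lhs => rw [← h, TensorProduct.tmul_sum]
  refine Finset.sum_congr rfl fun x _ => ?_
  rw [TensorProduct.tmul_smul]
  rfl

lemma psi_dual (hdbar : ∀ x : II hm, dbar ((II hm).toCotangent x)
      = 1 ⊗ₜ[PP m] (KaehlerDifferential.D ℂ (PP m) x.1))
    (l : Module.Dual (PP m ⧸ II hm) ((PP m ⧸ II hm) ⊗[PP m] (KaehlerDifferential ℂ (PP m))))
    (i : Fin r) (f : II hm) :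
    psi (dbar.dualMap l) i f = der i (fun x => evB hm i
      (l ((1 : PP m ⧸ II hm) ⊗ₜ[PP m] (KaehlerDifferential.D ℂ (PP m) (X x))))) f.1 := by
  have e : dbar.dualMap l ((II hm).toCotangent f) = l (dbar ((II hm).toCotangent f)) := rfl
  rw [psi, e, hdbar, tmul_D, map_sum, map_sum, der]
  refine Finset.sum_congr rfl fun x _ => ?_
  rw [map_smul, smul_eq_mul, map_mul, evB_mk, mul_comm]

lemma exists_dual (v : Idx m → PP m ⧸ II hm) :
    ∃ l : Module.Dual (PP m ⧸ II hm) ((PP m ⧸ II hm) ⊗[PP m] (KaehlerDifferential ℂ (PP m))),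
    ∀ x, l ((1 : PP m ⧸ II hm) ⊗ₜ[PP m] (KaehlerDifferential.D ℂ (PP m) (X x))) = v x := by
  let b := Algebra.TensorProduct.basis (PP m ⧸ II hm)
    (KaehlerDifferential.mvPolynomialBasis ℂ (Idx m))
  refine ⟨b.constr (PP m ⧸ II hm) v, fun x => ?_⟩
  have : (1 : PP m ⧸ II hm) ⊗ₜ[PP m] (KaehlerDifferential.D ℂ (PP m) (X x)) = b x := by
    rw [Algebra.TensorProduct.basis_apply, KaehlerDifferential.mvPolynomialBasis_apply]
  rw [this, Module.Basis.constr_basis]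

variable (hm) in
/-- coefficients of the constant vector fields -/
noncomputable def kap : (Idx m → ℂ) →ₗ[ℂ] (JJ m → ℂ) where
  toFun c j := (GG hm j.1.1 j.1.2
    (fun f => der j.1.1 (fun x => Polynomial.C (c x)) f.1)).coeff (m j.1.1 + (j.2 : ℕ))
  map_add' c c' := by
    funext j
    simp only [Pi.add_apply, Polynomial.C_add, der_add_W, GG_add, Polynomial.coeff_add]
  map_smul' c c' := by
    funext j
    simp only [Pi.smul_apply, smul_eq_mul, Polynomial.C_mul, der_mul_W, GG_mul,
      Polynomial.coeff_C_mul, RingHom.id_apply]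

lemma kap_inj (h3 : 3 ≤ ∑ i, m i) : Function.Injective (kap hm) := by
  rw [← LinearMap.ker_eq_bot, LinearMap.ker_eq_bot']
  intro c hc
  refine inj_const (hm := hm) h3 c fun i x j hj => ?_
  exact congrFun hc ⟨(i, x), ⟨j, hj⟩⟩

lemma Phi_eq_kap (φ : Module.Dual (PP m ⧸ II hm) (II hm).Cotangent)
    (v : Idx m → PP m ⧸ II hm) (c : Idx m → ℂ) (h : Fin r → Idx m → Polynomial ℂ)
    (hv : ∀ i x, evB hm i (v x) = Polynomial.C (c x) + Polynomial.X ^ m i * h i x)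
    (hφ : ∀ i f, psi φ i f = der i (fun x => evB hm i (v x)) f.1) :
    Phi hm φ = kap hm c := by
  funext j
  obtain ⟨⟨i, x⟩, j⟩ := j
  show (GG hm i x (psi φ i)).coeff (m i + (j : ℕ)) =
    (GG hm i x (fun f => der i (fun x => Polynomial.C (c x)) f.1)).coeff (m i + (j : ℕ))
  have e : psi φ i = fun f => der i (fun x => Polynomial.C (c x)) f.1 +
      der i (fun x => Polynomial.X ^ m i * h i x) f.1 := by
    funext f
    rw [hφ, ← der_add_W]
    simp only [hv]
  rw [e, GG_add, Polynomial.coeff_add]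
  obtain ⟨q, hq⟩ := dvd_GG (hm := hm) i (h i) x
  have := j.2
  rw [hq, Polynomial.coeff_X_pow_mul', if_neg (by simp only at this; omega), add_zero]

lemma map_range (hr : 1 ≤ r) (hdbar : ∀ x : II hm, dbar ((II hm).toCotangent x)
      = 1 ⊗ₜ[PP m] (KaehlerDifferential.D ℂ (PP m) x.1)) :
    ((LinearMap.range dbar.dualMap).restrictScalars ℂ).map (Phi hm) =
      LinearMap.range (kap hm) := by
  apply le_antisymm
  · rintro _ ⟨_, ⟨l, rfl⟩, rfl⟩
    choose c h hv using fun x => evB_form (l ((1 : PP m ⧸ II hm) ⊗ₜ[PP m]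
      (KaehlerDifferential.D ℂ (PP m) (X x))))
    exact ⟨c, (Phi_eq_kap _ _ c (fun i x => h x i) (fun i x => hv x i)
      (psi_dual dbar hdbar l)).symm⟩
  · rintro _ ⟨c, rfl⟩
    obtain ⟨l, hl⟩ := exists_dual (hm := hm) (fun x => algebraMap ℂ _ (c x))
    refine ⟨dbar.dualMap l, ⟨l, rfl⟩, ?_⟩
    refine Phi_eq_kap _ _ c (fun i x => 0) (fun i x => ?_) (psi_dual dbar hdbar l)
    rw [hl, AlgHom.commutes, mul_zero, add_zero]; rfl

lemma ker_le (hr : 1 ≤ r) (h3 : 3 ≤ ∑ i, m i)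
    (hdbar : ∀ x : II hm, dbar ((II hm).toCotangent x)
      = 1 ⊗ₜ[PP m] (KaehlerDifferential.D ℂ (PP m) x.1)) :
    LinearMap.ker (Phi hm) ≤ (LinearMap.range dbar.dualMap).restrictScalars ℂ := by
  intro φ hφ
  obtain ⟨v, hv⟩ := ker_Phi h3 φ hφ
  obtain ⟨l, hl⟩ := exists_dual v
  refine ⟨l, psi_ext hr _ _ fun i f => ?_⟩
  rw [hv, psi_dual dbar hdbar]
  simp only [hl]

end final

lemma finrank_abstract {H J K : Type*} [AddCommGroup H] [Module ℂ H] [Fintype J] [Fintype K]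
    (R : Submodule ℂ H) (Φ : H →ₗ[ℂ] (J → ℂ)) (κ : (K → ℂ) →ₗ[ℂ] (J → ℂ))
    (hs : Function.Surjective Φ) (hk : LinearMap.ker Φ ≤ R) (hR : R.map Φ = LinearMap.range κ)
    (hi : Function.Injective κ) :
    Module.finrank ℂ (H ⧸ R) = Fintype.card J - Fintype.card K := by
  let Ψ := (R.map Φ).mkQ.comp Φ
  have h1 : Function.Surjective Ψ := (Submodule.mkQ_surjective _).comp hs
  have h2 : LinearMap.ker Ψ = R := by
    rw [LinearMap.ker_comp, Submodule.ker_mkQ, Submodule.comap_map_eq, sup_eq_left.2 hk]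
  have e := (Submodule.quotEquivOfEq _ _ h2).symm.trans (Ψ.quotKerEquivOfSurjective h1)
  rw [e.finrank_eq, Submodule.finrank_quotient, hR, LinearMap.finrank_range_of_inj hi]
  simp

lemma main (hr : 1 ≤ r) (h3 : 3 ≤ ∑ i, m i)
    (dbar : (II hm).Cotangent →ₗ[PP m ⧸ II hm]
      (PP m ⧸ II hm) ⊗[PP m] (KaehlerDifferential ℂ (PP m)))
    (hdbar : ∀ x : II hm, dbar ((II hm).toCotangent x)
      = 1 ⊗ₜ[PP m] (KaehlerDifferential.D ℂ (PP m) x.1)) :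
    Module.finrank ℂ ((Module.Dual (PP m ⧸ II hm) (II hm).Cotangent) ⧸
        LinearMap.range dbar.dualMap) = (∑ i, m i) * ((∑ i, m i) - 1) - r := by
  have h := finrank_abstract _ (Phi hm) (kap hm) (Phi_surj hr) (ker_le dbar hr h3 hdbar)
    (map_range dbar hr hdbar) (kap_inj h3)
  rw [(Submodule.Quotient.restrictScalarsEquiv ℂ (LinearMap.range dbar.dualMap)).finrank_eq] at h
  rw [h]
  have c1 := card_JJ hm
  have c2 : Fintype.card (Idx m) = ∑ i, m i := by simp
  rw [c2, Nat.mul_sub, mul_one]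
  omega

end RPC

/-- Let `n = m_1 + ⋯ + m_r ≥ 3` (`r ≥ 1`, `m_i ≥ 1`), let `P` be the polynomial ring over ℂ
in the `n` variables `z^{(i)}_a`, and let `I` be the ideal generated by the 2×2 minors
`z^{(i)}_a σ_i(b) − z^{(i)}_b σ_i(a)` (`a < b`) within each branch — where `σ_i(a) = z^{(i)}_{a+1}`
for `a < m_i` and `σ_i(m_i) = (z^{(i)}_1)²` — together with the cross products
`z^{(k)}_a z^{(l)}_b` (`k ≠ l`). Set `B = P/I` (the rational partition curve). With
`d̄ : I/I² → B ⊗_P Ω_{P/ℂ}` induced by the universal derivation, the cokernel `T¹` of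
`Hom_B(B ⊗_P Ω_{P/ℂ}, B) → Hom_B(I/I², B)` (precomposition with `d̄`) has
`dim_ℂ T¹ = n(n−1) − r`. -/
theorem stmt_11 (r : ℕ) (hr : 1 ≤ r) (m : Fin r → ℕ) (hm : ∀ i, 1 ≤ m i)
    (n : ℕ) (hn : n = ∑ i, m i) (hn3 : 3 ≤ n)
    (σ : ∀ i : Fin r, Fin (m i) → MvPolynomial ((i : Fin r) × Fin (m i)) ℂ)
    (hσ : ∀ (i : Fin r) (a : Fin (m i)), σ i a =
      if h : (a : ℕ) + 1 < m i then MvPolynomial.X ⟨i, ⟨(a : ℕ) + 1, h⟩⟩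
      else (MvPolynomial.X ⟨i, ⟨0, hm i⟩⟩) ^ 2)
    (I : Ideal (MvPolynomial ((i : Fin r) × Fin (m i)) ℂ))
    (hI : I = Ideal.span
      ({p : MvPolynomial ((i : Fin r) × Fin (m i)) ℂ |
          ∃ (i : Fin r) (a b : Fin (m i)), a < b ∧
            p = MvPolynomial.X ⟨i, a⟩ * σ i b - MvPolynomial.X ⟨i, b⟩ * σ i a}
        ∪ {p : MvPolynomial ((i : Fin r) × Fin (m i)) ℂ |
          ∃ (k l : Fin r) (a : Fin (m k)) (b : Fin (m l)), k ≠ l ∧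
            p = MvPolynomial.X ⟨k, a⟩ * MvPolynomial.X ⟨l, b⟩}))
    (dbar : I.Cotangent →ₗ[MvPolynomial ((i : Fin r) × Fin (m i)) ℂ ⧸ I]
      (MvPolynomial ((i : Fin r) × Fin (m i)) ℂ ⧸ I) ⊗[MvPolynomial ((i : Fin r) × Fin (m i)) ℂ]
        (KaehlerDifferential ℂ (MvPolynomial ((i : Fin r) × Fin (m i)) ℂ)))
    (hdbar : ∀ x : I, dbar (I.toCotangent x)
      = 1 ⊗ₜ[MvPolynomial ((i : Fin r) × Fin (m i)) ℂ]
          (KaehlerDifferential.D ℂ (MvPolynomial ((i : Fin r) × Fin (m i)) ℂ) x.1)) :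
    Module.finrank ℂ
      ((Module.Dual (MvPolynomial ((i : Fin r) × Fin (m i)) ℂ ⧸ I) I.Cotangent) ⧸
        LinearMap.range dbar.dualMap)
      = n * (n - 1) - r := by
  have hI' : I = RPC.II hm := by
    rw [hI, RPC.II]
    have hZ : ∀ (i : Fin r) (a : Fin (m i)), RPC.Z hm i ((a : ℕ) + 1) = σ i a := by
      intro i a
      rw [hσ]
      split_ifs with h
      · exact RPC.Z_lt hm i _ h
      · have e : (a : ℕ) + 1 = m i := by have := a.2; omega
        rw [e]; exact RPC.Z_self hm i
    have hX : ∀ (i : Fin r) (a : Fin (m i)),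
        RPC.Z hm i (a : ℕ) = MvPolynomial.X ⟨i, a⟩ := by
      intro i a
      exact RPC.Z_lt hm i _ a.2
    congr 2
    · ext p
      constructor
      · rintro ⟨i, a, b, hab, rfl⟩
        refine ⟨i, a, b, hab, b.2, ?_⟩
        rw [RPC.ff, hX, hX, hZ, hZ]
      · rintro ⟨i, a, b, hab, hb, rfl⟩
        refine ⟨i, ⟨a, by omega⟩, ⟨b, hb⟩, hab, ?_⟩
        rw [RPC.ff, ← hX, ← hX, ← hZ, ← hZ]
    · ext p
      constructor
      · rintro ⟨k, l, a, b, hkl, rfl⟩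
        refine ⟨k, l, a, b, hkl, a.2, b.2, ?_⟩
        rw [hX, hX]
      · rintro ⟨k, l, a, b, hkl, ha, hb, rfl⟩
        refine ⟨k, l, ⟨a, ha⟩, ⟨b, hb⟩, hkl, ?_⟩
        rw [← hX, ← hX]
  clear hI
  subst hI'
  subst hn
  exact RPC.main hr hn3 dbar hdbar
end
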